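/- arXiv:1606.04665 — 2 statements merged into one kernel-verified Lean document; each statement's English description precedes it below -/
import Mathlib

section
/- Second-order (convexity) energy inequality for the truncated Preisach operator in the simplest case of a single play: if ρ_R(r,·) ≡ a is constant in v with a > 0, then for every 2π-periodic p ∈ W^{2,1}_per one has −∫_{2π}^{4π} G_R[p]_t(t) p_tt(t) dt ≥ 0. -/
open MeasureTheory Set

/-- `IsPlayLoc r p ξ ξ'` : `ξ` (locally `W^{1,1}` on `[0,∞)`, with a.e. derivative `ξ'`)
solves the play variational inequality with input `p` and memory parameter `r` on `[0,∞)`. -/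
def IsPlayLoc (r : ℝ) (p ξ ξ' : ℝ → ℝ) : Prop :=
  (∀ T > (0:ℝ), IntervalIntegrable ξ' volume 0 T) ∧
  (∀ t ∈ Set.Ici (0:ℝ), ξ t = ξ 0 + ∫ s in (0:ℝ)..t, ξ' s) ∧
  (∀ t ∈ Set.Ici (0:ℝ), |p t - ξ t| ≤ r) ∧
  (∀ᵐ t ∂(volume.restrict (Set.Ici (0:ℝ))),
      ∀ z ∈ Set.Icc (-r) r, 0 ≤ ξ' t * (p t - ξ t - z)) ∧
  p 0 - ξ 0 = max (-r) (min (p 0) r)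

/-!
The play is monotone: if `ξ` and `η` are the outputs for the inputs `p` and `q`, then
`(ξ - η)' * ((p - q) - (ξ - η)) ≥ 0` almost everywhere, because each variational inequality may be
tested with the state `p - ξ` or `q - η` of the other. Integrating over a period, the part
`(ξ - η)' * (ξ - η)` drops out, so that `∫ (ξ - η)' * (p - q) ≥ 0` and, by parts,
`∫ (ξ - η) * (p - q)' ≤ 0`.

Taking for `η` and `q` the shifts of `ξ` and `p` by a time `h` and integrating against the density
`a` shows that the increments of `G_R[p]` and of `p'` satisfy
`∫ (G(t + h) - G(t)) * (p'(t + h) - p'(t)) dt ≤ 0`. Divide by `h²` and let `h → 0`: the difference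
quotients of `G` are bounded, since the play is Lipschitz with the constant of its input, and those
of `p'` are dominated by the quotients of a primitive of `|p''|`, which converge in mean.
-/

section

open Filter Topology
open scoped NNReal

section DominatedConvergence

variable {α ι E : Type*} [MeasurableSpace α] {μ : Measure α}
  [NormedAddCommGroup E] [NormedSpace ℝ E] {l : Filter ι} [l.IsCountablyGenerated]

theorem tendsto_integral_min {u : ι → α → ℝ} {v g : α → ℝ}
    (hu : ∀ᶠ i in l, AEStronglyMeasurable (u i) μ) (hu_nonneg : ∀ᶠ i in l, ∀ᵐ x ∂μ, 0 ≤ u i x)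
    (hg : Integrable g μ) (h_lim : ∀ᵐ x ∂μ, Tendsto (fun i => u i x) l (𝓝 (v x))) :
    Tendsto (fun i => ∫ x, min (u i x) (g x) ∂μ) l (𝓝 (∫ x, min (v x) (g x) ∂μ)) := by
  refine tendsto_integral_filter_of_dominated_convergence (fun x => |g x|)
    (hu.mono fun i hi => hi.inf hg.aestronglyMeasurable) ?_ hg.abs ?_
  · filter_upwards [hu_nonneg] with i hi
    filter_upwards [hi] with x hx
    rcases min_cases (u i x) (g x) with ⟨h, hle⟩ | ⟨h, -⟩ <;> rw [h, Real.norm_eq_abs]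
    exact abs_le_abs_of_nonneg hx hle
  · filter_upwards [h_lim] with x hx using hx.min tendsto_const_nhds

variable {F : ι → α → E} {f : α → E} {bound : ι → α → ℝ} {b : α → ℝ}

theorem tendsto_integral_of_dominated_of_tendsto_integral
    (hF : ∀ᶠ i in l, AEStronglyMeasurable (F i) μ) (hf : Integrable f μ)
    (hbound : ∀ᶠ i in l, Integrable (bound i) μ) (hb : Integrable b μ)
    (h_le : ∀ᶠ i in l, ∀ᵐ x ∂μ, ‖F i x‖ ≤ bound i x)
    (h_lim : ∀ᵐ x ∂μ, Tendsto (fun i => F i x) l (𝓝 (f x)))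
    (h_lim_bound : ∀ᵐ x ∂μ, Tendsto (fun i => bound i x) l (𝓝 (b x)))
    (h_int : Tendsto (fun i => ∫ x, bound i x ∂μ) l (𝓝 (∫ x, b x ∂μ))) :
    Tendsto (fun i => ∫ x, F i x ∂μ) l (𝓝 (∫ x, f x ∂μ)) := by
  have h_dom : Integrable (fun x => |b x| + ‖f x‖) μ := hb.abs.add hf.norm
  -- The excess of `bound i` over its limit `b` is integrated away by convergence of the integrals;
  -- what remains of `‖F i - f‖` is dominated by `|b| + ‖f‖`.
  have h_trunc : Tendsto (fun i => ∫ x, min ‖F i x - f x‖ (|b x| + ‖f x‖) ∂μ) l (𝓝 0) := by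
    have h_norm : ∀ᵐ x ∂μ, Tendsto (fun i => ‖F i x - f x‖) l (𝓝 0) :=
      h_lim.mono fun x hx => tendsto_iff_norm_sub_tendsto_zero.1 hx
    have h_min : ∀ x, min 0 (|b x| + ‖f x‖) = 0 := fun x => min_eq_left (by positivity)
    simpa only [h_min, integral_zero] using tendsto_integral_min
      (u := fun i x => ‖F i x - f x‖) (hF.mono fun i hi => (hi.sub hf.1).norm)
      (.of_forall fun i => .of_forall fun x => norm_nonneg _) h_dom h_norm
  have h_excess :
      Tendsto (fun i => ∫ x, bound i x ∂μ - ∫ x, min (bound i x) (b x) ∂μ) l (𝓝 0) := by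
    rw [← sub_self (∫ x, b x ∂μ)]
    refine h_int.sub ?_
    simpa only [min_self] using tendsto_integral_min (hbound.mono fun i hi => hi.1)
      (h_le.mono fun i hi => hi.mono fun x hx => (norm_nonneg _).trans hx) hb h_lim_bound
  rw [tendsto_iff_norm_sub_tendsto_zero]
  refine squeeze_zero' (.of_forall fun i => norm_nonneg _) ?_ (by simpa using h_trunc.add h_excess)
  filter_upwards [hF, hbound, h_le] with i hFi hbi hle
  have hF_int : Integrable (F i) μ := hbi.mono' hFi hle
  have h_min : Integrable (fun x => min ‖F i x - f x‖ (|b x| + ‖f x‖)) μ :=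
    (hF_int.sub hf).norm.inf h_dom
  have h_min_bound : Integrable (fun x => min (bound i x) (b x)) μ := hbi.inf hb
  rw [← integral_sub hF_int hf, ← integral_sub hbi h_min_bound,
    ← integral_add (g := fun x => bound i x - min (bound i x) (b x)) h_min (hbi.sub h_min_bound)]
  refine norm_integral_le_of_norm_le (h_min.add (hbi.sub h_min_bound)) ?_
  filter_upwards [hle] with x hx
  have h_tri := norm_sub_le (F i x) (f x)
  have h_abs := le_abs_self (b x)
  rcases min_cases ‖F i x - f x‖ (|b x| + ‖f x‖) with h | h <;>
    rcases min_cases (bound i x) (b x) with h' | h' <;> linarith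

end DominatedConvergence

section Primitive

variable {f f' : ℝ → ℝ} {a b : ℝ}

theorem absolutelyContinuousOnInterval_of_eq_add_integral (hf' : IntervalIntegrable f' volume a b)
    (hf : ∀ t ∈ uIcc a b, f t = f a + ∫ s in a..t, f' s) :
    AbsolutelyContinuousOnInterval f a b := by
  have h_prim := hf'.absolutelyContinuousOnInterval_intervalIntegral left_mem_uIcc
  rw [absolutelyContinuousOnInterval_iff] at h_prim ⊢
  intro ε hε
  obtain ⟨δ, hδ, h⟩ := h_prim ε hε
  refine ⟨δ, hδ, fun I hI hlen => lt_of_eq_of_lt (Finset.sum_congr rfl fun i hi => ?_)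
    (h I hI hlen)⟩
  rw [hf _ (hI.1 i hi).1, hf _ (hI.1 i hi).2, dist_add_left]

theorem ae_hasDerivAt_of_eq_add_integral (hf' : IntervalIntegrable f' volume a b)
    (hf : ∀ t ∈ Icc a b, f t = f a + ∫ s in a..t, f' s) :
    ∀ᵐ t, t ∈ Ioo a b → HasDerivAt f (f' t) t := by
  filter_upwards [hf'.ae_hasDerivAt_integral] with t h_prim ht
  have h_deriv := h_prim (Icc_subset_uIcc (Ioo_subset_Icc_self ht)) a left_mem_uIcc
  refine (h_deriv.const_add (f a)).congr_of_eventuallyEq ?_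
  filter_upwards [Ioo_mem_nhds ht.1 ht.2] with x hx using hf x (Ioo_subset_Icc_self hx)

theorem hasDerivWithinAt_of_eq_add_integral (hf' : ContinuousOn f' (Icc a b))
    (hf : ∀ t ∈ Icc a b, f t = f a + ∫ s in a..t, f' s) {t : ℝ} (ht : t ∈ Icc a b) :
    HasDerivWithinAt f (f' t) (Icc a b) t := by
  have : Fact (t ∈ Icc a b) := ⟨ht⟩
  have h_deriv : HasDerivWithinAt (fun x => ∫ s in a..x, f' s) (f' t) (Icc a b) t :=
    intervalIntegral.integral_hasDerivWithinAt_right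
      ((hf'.mono (Icc_subset_Icc_right ht.2)).intervalIntegrable_of_Icc ht.1)
      (hf'.stronglyMeasurableAtFilter_nhdsWithin measurableSet_Icc t) (hf' t ht)
  exact (h_deriv.const_add (f a)).congr hf (hf t ht)

theorem integral_deriv_mul_deriv_eq {g g' : ℝ → ℝ} (hab : a ≤ b)
    (hf : ∀ᵐ t, t ∈ Ioo a b → HasDerivAt f (f' t) t)
    (hg : ∀ᵐ t, t ∈ Ioo a b → HasDerivAt g (g' t) t) :
    ∫ t in a..b, deriv f t * deriv g t = ∫ t in a..b, f' t * g' t := by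
  simp only [intervalIntegral.integral_of_le hab, integral_Ioc_eq_integral_Ioo]
  refine setIntegral_congr_ae measurableSet_Ioo ?_
  filter_upwards [hf, hg] with t hft hgt ht
  rw [(hft ht).deriv, (hgt ht).deriv]

theorem exists_continuous_primitive {E : Type*} [NormedAddCommGroup E] [NormedSpace ℝ E]
    [CompleteSpace E] {φ : ℝ → E} (hφ : IntervalIntegrable φ volume a b) :
    ∃ F : ℝ → E, Continuous F ∧
      (∀ s ∈ Icc a b, ∀ t ∈ Icc a b, F t - F s = ∫ u in s..t, φ u) ∧
      ∀ᵐ t, t ∈ Ioo a b → HasDerivAt F (φ t) t := by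
  have h_int : Integrable ((Ioc a b).indicator φ) :=
    (integrable_indicator_iff measurableSet_Ioc).2 hφ.1
  refine ⟨fun t => ∫ u in a..t, (Ioc a b).indicator φ u,
    intervalIntegral.continuous_primitive (fun _ _ => h_int.intervalIntegrable) a,
    fun s hs t ht => ?_, ?_⟩
  · rw [intervalIntegral.integral_interval_sub_left h_int.intervalIntegrable
      h_int.intervalIntegrable]
    refine intervalIntegral.integral_congr_ae (.of_forall fun u hu => indicator_of_mem ?_ φ)
    exact ⟨(le_min hs.1 ht.1).trans_lt hu.1, hu.2.trans (max_le hs.2 ht.2)⟩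
  · filter_upwards [LocallyIntegrable.ae_hasDerivAt_integral h_int.locallyIntegrable]
      with t h_deriv ht
    simpa only [indicator_of_mem (Ioo_subset_Ioc_self ht)] using h_deriv a

end Primitive

section AbsolutelyContinuous

variable {f g : ℝ → ℝ} {a b c : ℝ}

theorem le_of_ae_deriv_nonpos_of_lt (hf : AbsolutelyContinuousOnInterval f a b) (hab : a ≤ b)
    (ha : f a ≤ c) (h : ∀ᵐ t, t ∈ Ioo a b → c < f t → deriv f t ≤ 0) : f b ≤ c := by
  have h_cont : ContinuousOn f (Icc a b) := uIcc_of_le hab ▸ hf.continuousOn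
  have h_compact : IsCompact (Icc a b ∩ f ⁻¹' Iic c) :=
    isCompact_Icc.of_isClosed_subset
      (h_cont.preimage_isClosed_of_isClosed isClosed_Icc isClosed_Iic) inter_subset_left
  obtain ⟨u, ⟨hu, huc⟩, hu_last⟩ := h_compact.exists_isGreatest ⟨a, ⟨le_rfl, hab⟩, ha⟩
  have h_sub : ∫ t in u..b, deriv f t = f b - f u :=
    (hf.mono (uIcc_subset_uIcc_right (Icc_subset_uIcc hu))).integral_deriv_eq_sub
  have h_nonpos : ∫ t in u..b, deriv f t ≤ 0 := by
    rw [intervalIntegral.integral_of_le hu.2, integral_Ioc_eq_integral_Ioo]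
    refine setIntegral_nonpos_ae measurableSet_Ioo ?_
    filter_upwards [h] with t ht htu
    have hta : a ≤ t := hu.1.trans htu.1.le
    refine ht ⟨hu.1.trans_lt htu.1, htu.2⟩ (lt_of_not_ge fun htc => ?_)
    exact (hu_last ⟨⟨hta, htu.2.le⟩, htc⟩).not_gt htu.1
  exact (sub_nonpos.1 (h_sub ▸ h_nonpos)).trans huc

theorem integral_mul_deriv_nonpos (hf : AbsolutelyContinuousOnInterval f a b)
    (hg : AbsolutelyContinuousOnInterval g a b) (hab : a ≤ b) (hfab : f b = f a)
    (hgab : g b = g a) (h : ∀ᵐ t, t ∈ Ioo a b → 0 ≤ deriv f t * (g t - f t)) :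
    ∫ t in a..b, f t * deriv g t ≤ 0 := by
  have h_self : ∫ t in a..b, deriv f t * f t = 0 := by
    have h_parts := hf.integral_mul_deriv_eq_deriv_mul hf
    simp only [hfab, sub_self, mul_comm (f _) (deriv f _)] at h_parts
    linarith
  have h_parts : ∫ t in a..b, f t * deriv g t = -∫ t in a..b, deriv f t * g t := by
    rw [hf.integral_mul_deriv_eq_deriv_mul hg, hfab, hgab, sub_self, zero_sub]
  have h_nonneg : 0 ≤ ∫ t in a..b, deriv f t * (g t - f t) := by
    rw [intervalIntegral.integral_of_le hab, integral_Ioc_eq_integral_Ioo]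
    exact setIntegral_nonneg_of_ae_restrict ((ae_restrict_iff' measurableSet_Ioo).2 h)
  simp only [mul_sub] at h_nonneg
  rw [intervalIntegral.integral_sub (hf.intervalIntegrable_deriv.mul_continuousOn hg.continuousOn)
    (hf.intervalIntegrable_deriv.mul_continuousOn hf.continuousOn), h_self] at h_nonneg
  linarith

theorem absolutelyContinuousOnInterval_comp_add_right {h : ℝ}
    (hf : AbsolutelyContinuousOnInterval f (a + h) (b + h)) :
    AbsolutelyContinuousOnInterval (fun t => f (t + h)) a b := by
  refine absolutelyContinuousOnInterval_of_eq_add_integral (f' := fun s => deriv f (s + h))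
    (by simpa using hf.intervalIntegrable_deriv.comp_add_right h) fun t ht => ?_
  have h_mem : t + h ∈ uIcc (a + h) (b + h) := by
    rw [← image_add_const_uIcc]
    exact mem_image_of_mem _ ht
  rw [intervalIntegral.integral_comp_add_right, (hf.mono
    (uIcc_subset_uIcc_left h_mem)).integral_deriv_eq_sub, add_sub_cancel]

end AbsolutelyContinuous

section DifferenceQuotients

theorem tendsto_integral_smul_increment {E : Type*} [NormedAddCommGroup E] [NormedSpace ℝ E]
    [CompleteSpace E] {F : ℝ → E} (hF : Continuous F) (a b : ℝ) :
    Tendsto (fun h : ℝ => ∫ t in a..b, h⁻¹ • (F (t + h) - F t)) (𝓝[≠] 0) (𝓝 (F b - F a)) := by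
  have h_deriv (c : ℝ) : HasDerivAt (fun x => ∫ t in (0 : ℝ)..x, F t) (F c) c :=
    (hF.integral_hasStrictDerivAt 0 c).hasDerivAt
  refine (((h_deriv b).tendsto_slope_zero).sub (h_deriv a).tendsto_slope_zero).congr fun h => ?_
  have h_int (x y : ℝ) : IntervalIntegrable F volume x y := hF.intervalIntegrable x y
  have h_int_shift : IntervalIntegrable (fun t => F (t + h)) volume a b :=
    (hF.comp (continuous_add_const h)).intervalIntegrable a b
  rw [intervalIntegral.integral_smul, intervalIntegral.integral_sub h_int_shift (h_int a b),
    intervalIntegral.integral_comp_add_right, ← smul_sub,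
    ← intervalIntegral.integral_interval_sub_left (h_int 0 (b + h)) (h_int 0 (a + h)),
    ← intervalIntegral.integral_interval_sub_left (h_int 0 b) (h_int 0 a)]
  congr 1
  abel

variable {f g : ℝ → ℝ} {a b c : ℝ}

theorem exists_continuous_abs_sub_le_sub (hg : AbsolutelyContinuousOnInterval g a b) :
    ∃ V : ℝ → ℝ, Continuous V ∧
      (∀ s ∈ Icc a b, ∀ t ∈ Icc a b, V t - V s = ∫ u in s..t, |deriv g u|) ∧
      (∀ s ∈ Icc a b, ∀ t ∈ Icc a b, s ≤ t → |g t - g s| ≤ V t - V s) ∧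
      ∀ᵐ t, t ∈ Ioo a b → HasDerivAt V |deriv g t| t := by
  obtain ⟨V, hV, hV_sub, hV_deriv⟩ := exists_continuous_primitive hg.intervalIntegrable_deriv.abs
  refine ⟨V, hV, hV_sub, fun s hs t ht hst => ?_, hV_deriv⟩
  rw [hV_sub s hs t ht, ← (hg.mono (uIcc_subset_uIcc (Icc_subset_uIcc hs)
    (Icc_subset_uIcc ht))).integral_deriv_eq_sub]
  exact intervalIntegral.abs_integral_le_integral_abs hst

theorem continuousOn_slope (hf : ContinuousOn f (Icc a c)) {h : ℝ} (hh : h ∈ Icc 0 (c - b)) :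
    ContinuousOn (fun t => h⁻¹ * (f (t + h) - f t)) (Icc a b) := by
  have h_shift : MapsTo (fun t => t + h) (Icc a b) (Icc a c) := fun t ht =>
    ⟨by linarith [ht.1, hh.1], by linarith [ht.2, hh.2]⟩
  exact ((hf.comp (by fun_prop) h_shift).sub
    (hf.mono (Icc_subset_Icc_right (by linarith [hh.1, hh.2])))).const_mul _

theorem tendsto_integral_mul_slope {φ : ℝ → ℝ → ℝ} {ψ : ℝ → ℝ} {K : ℝ} (hab : a ≤ b) (hbc : b < c)
    (hg : AbsolutelyContinuousOnInterval g a c)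
    (hφ : ∀ᶠ h in 𝓝[>] 0, AEStronglyMeasurable (φ h) (volume.restrict (Ioo a b)))
    (hφ_le : ∀ᶠ h in 𝓝[>] 0, ∀ t ∈ Ioo a b, |φ h t| ≤ K)
    (hψ : AEStronglyMeasurable ψ (volume.restrict (Ioo a b))) (hψ_le : ∀ t ∈ Ioo a b, |ψ t| ≤ K)
    (h_lim : ∀ᵐ t, t ∈ Ioo a b → Tendsto (fun h => φ h t) (𝓝[>] 0) (𝓝 (ψ t))) :
    Tendsto (fun h : ℝ => ∫ t in a..b, φ h t * (h⁻¹ * (g (t + h) - g t)))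
      (𝓝[>] 0) (𝓝 (∫ t in a..b, ψ t * deriv g t)) := by
  have hac : a ≤ c := hab.trans hbc.le
  have h_step : ∀ᶠ h in 𝓝[>] (0 : ℝ), h ∈ Ioc 0 (c - b) := Ioc_mem_nhdsGT (sub_pos.2 hbc)
  have h_sub : Ioo a b ⊆ Ioo a c := Ioo_subset_Ioo_right hbc.le
  have hg_int : IntegrableOn (deriv g) (Ioo a b) :=
    hg.intervalIntegrable_deriv.1.mono_set (h_sub.trans Ioo_subset_Ioc_self)
  obtain ⟨V, hV, hV_int, hV_le, hV_deriv⟩ := exists_continuous_abs_sub_le_sub hg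
  simp only [intervalIntegral.integral_of_le hab, integral_Ioc_eq_integral_Ioo]
  refine tendsto_integral_of_dominated_of_tendsto_integral
    (bound := fun h t => K * (h⁻¹ * (V (t + h) - V t))) (b := fun t => K * |deriv g t|)
    ?_ (hg_int.bdd_mul hψ (ae_restrict_of_forall_mem measurableSet_Ioo hψ_le))
    (.of_forall fun h => ?_) (hg_int.abs.const_mul _) ?_ ?_ ?_ ?_
  · filter_upwards [h_step, hφ] with h hh hφh
    exact hφh.mul (((continuousOn_slope (uIcc_of_le hac ▸ hg.continuousOn)
      (Ioc_subset_Icc_self hh)).mono Ioo_subset_Icc_self).aestronglyMeasurable measurableSet_Ioo)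
  · have h_cont : Continuous fun t => K * (h⁻¹ * (V (t + h) - V t)) := by fun_prop
    exact h_cont.integrableOn_Icc.mono_set Ioo_subset_Icc_self
  · filter_upwards [h_step, hφ_le] with h hh hφh
    refine ae_restrict_of_forall_mem measurableSet_Ioo fun t ht => ?_
    have hg_le : |g (t + h) - g t| ≤ V (t + h) - V t :=
      hV_le t (Ioo_subset_Icc_self (h_sub ht)) (t + h)
        ⟨by linarith [ht.1, hh.1], by linarith [ht.2, hh.2]⟩ (by linarith [hh.1])
    have h_inv : 0 < h⁻¹ := inv_pos.2 hh.1
    have hK : 0 ≤ K := (abs_nonneg _).trans (hφh t ht)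
    rw [Real.norm_eq_abs, abs_mul, abs_mul, abs_of_pos h_inv]
    gcongr
    exact hφh t ht
  · refine (ae_restrict_iff' measurableSet_Ioo).2 ?_
    filter_upwards [h_lim, hg.ae_differentiableAt] with t hφt hgt ht
    exact (hφt ht).mul (hgt (Icc_subset_uIcc (Ioo_subset_Icc_self
      (h_sub ht)))).hasDerivAt.tendsto_slope_zero_right
  · refine (ae_restrict_iff' measurableSet_Ioo).2 ?_
    filter_upwards [hV_deriv] with t hVt ht
    exact (hVt (h_sub ht)).tendsto_slope_zero_right.const_mul K
  · simp only [← integral_Ioc_eq_integral_Ioo, ← intervalIntegral.integral_of_le hab,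
      intervalIntegral.integral_const_mul,
      ← hV_int a ⟨le_rfl, hac⟩ b ⟨hab, hbc.le⟩]
    simpa only [smul_eq_mul, intervalIntegral.integral_const_mul] using
      ((tendsto_integral_smul_increment hV a b).mono_left (nhdsGT_le_nhdsNE 0)).const_mul K

variable {K : ℝ≥0}

theorem tendsto_integral_slope_mul_slope (hab : a ≤ b) (hbc : b < c)
    (hf : LipschitzOnWith K f (Icc a c)) (hg : AbsolutelyContinuousOnInterval g a c) :
    Tendsto (fun h : ℝ => ∫ t in a..b, (h⁻¹ * (f (t + h) - f t)) * (h⁻¹ * (g (t + h) - g t)))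
      (𝓝[>] 0) (𝓝 (∫ t in a..b, deriv f t * deriv g t)) := by
  have h_step : ∀ᶠ h in 𝓝[>] (0 : ℝ), h ∈ Ioc 0 (c - b) := Ioc_mem_nhdsGT (sub_pos.2 hbc)
  have hf_ac : AbsolutelyContinuousOnInterval f a c :=
    (uIcc_of_le (hab.trans hbc.le) ▸ hf).absolutelyContinuousOnInterval
  have h_sub : Ioo a b ⊆ Ioo a c := Ioo_subset_Ioo_right hbc.le
  refine tendsto_integral_mul_slope (K := K) hab hbc hg ?_ ?_
    (measurable_deriv f).aestronglyMeasurable (fun t ht => ?_) ?_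
  · filter_upwards [h_step] with h hh
    exact ((continuousOn_slope hf.continuousOn (Ioc_subset_Icc_self hh)).mono
      Ioo_subset_Icc_self).aestronglyMeasurable measurableSet_Ioo
  · filter_upwards [h_step] with h hh t ht
    have h_dist := hf.dist_le_mul (t + h) ⟨by linarith [ht.1, hh.1], by linarith [ht.2, hh.2]⟩
      t (Ioo_subset_Icc_self (h_sub ht))
    rw [Real.dist_eq, Real.dist_eq, add_sub_cancel_left, abs_of_pos hh.1] at h_dist
    rwa [abs_mul, abs_of_pos (inv_pos.2 hh.1), inv_mul_le_iff₀ hh.1, mul_comm]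
  · exact norm_deriv_le_of_lipschitzOn (Icc_mem_nhds (h_sub ht).1 (h_sub ht).2) hf
  · filter_upwards [hf_ac.ae_differentiableAt] with t hft ht
    exact (hft (Icc_subset_uIcc (Ioo_subset_Icc_self
      (h_sub ht)))).hasDerivAt.tendsto_slope_zero_right

theorem integral_deriv_mul_deriv_nonpos (hab : a ≤ b) (hbc : b < c)
    (hf : LipschitzOnWith K f (Icc a c)) (hg : AbsolutelyContinuousOnInterval g a c)
    (h : ∀ h ∈ Ioc 0 (c - b), ∫ t in a..b, (f (t + h) - f t) * (g (t + h) - g t) ≤ 0) :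
    ∫ t in a..b, deriv f t * deriv g t ≤ 0 := by
  refine le_of_tendsto (tendsto_integral_slope_mul_slope hab hbc hf hg) ?_
  filter_upwards [Ioc_mem_nhdsGT (sub_pos.2 hbc)] with η hη
  simp only [mul_mul_mul_comm _ _ η⁻¹, intervalIntegral.integral_const_mul]
  exact mul_nonpos_of_nonneg_of_nonpos (mul_self_nonneg _) (h η hη)

end DifferenceQuotients

/-- `ξ` evolves on `[a, b]` by the play rule with input `p` and memory parameter `r`. Unlike
`IsPlayLoc` this leaves the initial state free, so that shifts and restrictions qualify. -/
structure IsPlayOn (r : ℝ) (p ξ : ℝ → ℝ) (a b : ℝ) : Prop where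
  absolutelyContinuous : AbsolutelyContinuousOnInterval ξ a b
  abs_sub_le : ∀ t ∈ Icc a b, |p t - ξ t| ≤ r
  variational : ∀ᵐ t, t ∈ Ioo a b → ∀ z ∈ Icc (-r) r, 0 ≤ deriv ξ t * (p t - ξ t - z)

namespace IsPlayOn

variable {r s a b c d : ℝ} {p q ξ η : ℝ → ℝ}

theorem const {x y : ℝ} (h : |x - y| ≤ r) : IsPlayOn r (fun _ => x) (fun _ => y) a b where
  absolutelyContinuous :=
    (LipschitzWith.const y).lipschitzOnWith.absolutelyContinuousOnInterval
  abs_sub_le _ _ := h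
  variational := .of_forall fun _ _ _ _ => by simp

theorem mono (hξ : IsPlayOn r p ξ a b) (hc : c ∈ Icc a b) (hd : d ∈ Icc a b) :
    IsPlayOn r p ξ c d where
  absolutelyContinuous := hξ.absolutelyContinuous.mono
    (uIcc_subset_uIcc (Icc_subset_uIcc hc) (Icc_subset_uIcc hd))
  abs_sub_le t ht := hξ.abs_sub_le t ⟨hc.1.trans ht.1, ht.2.trans hd.2⟩
  variational := hξ.variational.mono fun _ h ht => h ⟨hc.1.trans_lt ht.1, ht.2.trans_le hd.2⟩

theorem comp_add_right {h : ℝ} (hξ : IsPlayOn r p ξ (a + h) (b + h)) :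
    IsPlayOn r (fun t => p (t + h)) (fun t => ξ (t + h)) a b where
  absolutelyContinuous := absolutelyContinuousOnInterval_comp_add_right hξ.absolutelyContinuous
  abs_sub_le t ht := hξ.abs_sub_le (t + h) ⟨by linarith [ht.1], by linarith [ht.2]⟩
  variational := by
    filter_upwards [(measurePreserving_add_right volume h).quasiMeasurePreserving.ae
      hξ.variational] with t ht htab
    rw [deriv_comp_add_const]
    exact ht ⟨by linarith [htab.1], by linarith [htab.2]⟩

theorem ae_deriv_nonpos_of_sub_lt (hξ : IsPlayOn r p ξ a b) :
    ∀ᵐ t, t ∈ Ioo a b → p t - ξ t < r → deriv ξ t ≤ 0 := by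
  filter_upwards [hξ.variational] with t h ht hlt
  have hr : 0 ≤ r := (abs_nonneg _).trans (hξ.abs_sub_le t (Ioo_subset_Icc_self ht))
  exact nonpos_of_mul_nonneg_left (h ht r ⟨by linarith, le_rfl⟩) (sub_neg.2 hlt)

theorem ae_deriv_nonneg_of_lt_sub (hξ : IsPlayOn r p ξ a b) :
    ∀ᵐ t, t ∈ Ioo a b → -r < p t - ξ t → 0 ≤ deriv ξ t := by
  filter_upwards [hξ.variational] with t h ht hlt
  have hr : 0 ≤ r := (abs_nonneg _).trans (hξ.abs_sub_le t (Ioo_subset_Icc_self ht))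
  exact nonneg_of_mul_nonneg_left (h ht (-r) ⟨le_rfl, by linarith⟩) (sub_pos.2 hlt)

theorem sub_le_of_forall_add_le (hξ : IsPlayOn r p ξ a b) (hη : IsPlayOn s q η a b)
    (hab : a ≤ b) (hpq : ∀ t ∈ Icc a b, p t - q t + |r - s| ≤ c) (ha : ξ a - η a ≤ c) :
    ξ b - η b ≤ c := by
  refine le_of_ae_deriv_nonpos_of_lt (f := fun t => ξ t - η t)
    (hξ.absolutelyContinuous.sub hη.absolutelyContinuous) hab ha ?_
  filter_upwards [hξ.ae_deriv_nonpos_of_sub_lt, hη.ae_deriv_nonneg_of_lt_sub,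
    hξ.absolutelyContinuous.ae_differentiableAt, hη.absolutelyContinuous.ae_differentiableAt]
    with t hξ_nonpos hη_nonneg hξ_diff hη_diff ht hlt
  have ht_mem : t ∈ Icc a b := Ioo_subset_Icc_self ht
  have hξ_bound := abs_le.1 (hξ.abs_sub_le t ht_mem)
  have hη_bound := abs_le.1 (hη.abs_sub_le t ht_mem)
  have hrs := abs_le.1 (le_refl |r - s|)
  have hpq_t := hpq t ht_mem
  rw [deriv_fun_sub (hξ_diff (Icc_subset_uIcc ht_mem)) (hη_diff (Icc_subset_uIcc ht_mem))]
  exact sub_nonpos.2 ((hξ_nonpos ht (by linarith)).trans (hη_nonneg ht (by linarith)))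

theorem abs_sub_le_of_forall_add_le (hξ : IsPlayOn r p ξ a b) (hη : IsPlayOn s q η a b)
    (hab : a ≤ b) (hpq : ∀ t ∈ Icc a b, |p t - q t| + |r - s| ≤ c) (ha : |ξ a - η a| ≤ c) :
    |ξ b - η b| ≤ c := by
  obtain ⟨hξη, hηξ⟩ := abs_sub_le_iff.1 ha
  refine abs_sub_le_iff.2 ⟨hξ.sub_le_of_forall_add_le hη hab (fun t ht => ?_) hξη,
    hη.sub_le_of_forall_add_le hξ hab (fun t ht => ?_) hηξ⟩
  · linarith [hpq t ht, le_abs_self (p t - q t)]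
  · linarith [hpq t ht, neg_abs_le (p t - q t), abs_sub_comm r s]

theorem lipschitzOnWith {K : ℝ≥0} (hξ : IsPlayOn r p ξ a b) (hp : LipschitzOnWith K p (Icc a b)) :
    LipschitzOnWith K ξ (Icc a b) := by
  refine LipschitzOnWith.of_dist_le_mul fun v hv u hu => ?_
  wlog huv : u ≤ v generalizing u v
  · rw [dist_comm, dist_comm v]
    exact this u hu v hv (le_of_not_ge huv)
  have h_const : IsPlayOn r (fun _ => p u) (fun _ => ξ u) u v := .const (hξ.abs_sub_le u hu)
  refine (hξ.mono hu hv).abs_sub_le_of_forall_add_le h_const huv (fun t ht => ?_) ?_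
  · have h_dist := hp.dist_le_mul t ⟨hu.1.trans ht.1, ht.2.trans hv.2⟩ u hu
    rw [Real.dist_eq, Real.dist_eq, abs_of_nonneg (sub_nonneg.2 ht.1)] at h_dist
    rw [sub_self, abs_zero, add_zero, Real.dist_eq, abs_of_nonneg (sub_nonneg.2 huv)]
    exact h_dist.trans (by gcongr; exact ht.2)
  · rw [sub_self, abs_zero]
    positivity

theorem integral_sub_mul_deriv_sub_nonpos (hξ : IsPlayOn r p ξ a b) (hη : IsPlayOn r q η a b)
    (hp : AbsolutelyContinuousOnInterval p a b) (hq : AbsolutelyContinuousOnInterval q a b)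
    (hab : a ≤ b) (hξη : ξ b - η b = ξ a - η a) (hpq : p b - q b = p a - q a) :
    ∫ t in a..b, (ξ t - η t) * deriv (fun t => p t - q t) t ≤ 0 := by
  refine integral_mul_deriv_nonpos (f := fun t => ξ t - η t)
    (hξ.absolutelyContinuous.sub hη.absolutelyContinuous) (hp.sub hq) hab hξη hpq ?_
  filter_upwards [hξ.variational, hη.variational, hξ.absolutelyContinuous.ae_differentiableAt,
    hη.absolutelyContinuous.ae_differentiableAt] with t hξ_var hη_var hξ_diff hη_diff ht
  have ht_mem : t ∈ Icc a b := Ioo_subset_Icc_self ht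
  rw [deriv_fun_sub (hξ_diff (Icc_subset_uIcc ht_mem)) (hη_diff (Icc_subset_uIcc ht_mem))]
  linarith [hξ_var ht _ (abs_le.1 (hη.abs_sub_le t ht_mem)),
    hη_var ht _ (abs_le.1 (hξ.abs_sub_le t ht_mem))]

theorem integral_increment_mul_nonpos {p' : ℝ → ℝ} {h : ℝ} (hξ : IsPlayOn r p ξ a (b + h))
    (hp : AbsolutelyContinuousOnInterval p a (b + h))
    (hp' : ∀ t ∈ Ioo a (b + h), HasDerivAt p (p' t) t) (hab : a ≤ b) (hh : 0 ≤ h)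
    (hξ_per : ξ (b + h) - ξ b = ξ (a + h) - ξ a) (hp_per : p (b + h) - p b = p (a + h) - p a) :
    ∫ t in a..b, (ξ (t + h) - ξ t) * (p' (t + h) - p' t) ≤ 0 := by
  have ha : a ∈ Icc a (b + h) := ⟨le_rfl, by linarith⟩
  have hb : b ∈ Icc a (b + h) := ⟨hab, by linarith⟩
  have hah : a + h ∈ Icc a (b + h) := ⟨by linarith, by linarith⟩
  have hbh : b + h ∈ Icc a (b + h) := ⟨by linarith, le_rfl⟩
  have hp_mono {c d : ℝ} (hc : c ∈ Icc a (b + h)) (hd : d ∈ Icc a (b + h)) :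
      AbsolutelyContinuousOnInterval p c d :=
    hp.mono (uIcc_subset_uIcc (Icc_subset_uIcc hc) (Icc_subset_uIcc hd))
  refine (intervalIntegral.integral_congr_Ioo_of_le hab fun t ht => ?_).trans_le
    ((hξ.mono hah hbh).comp_add_right.integral_sub_mul_deriv_sub_nonpos (hξ.mono ha hb)
      (absolutelyContinuousOnInterval_comp_add_right (hp_mono hah hbh)) (hp_mono ha hb)
      hab hξ_per hp_per)
  have ht_mem : t ∈ Ioo a (b + h) := ⟨ht.1, by linarith [ht.2]⟩
  have hth_mem : t + h ∈ Ioo a (b + h) := ⟨by linarith [ht.1], by linarith [ht.2]⟩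
  exact congrArg _ (((hp' _ hth_mem).comp_add_const t h).sub (hp' t ht_mem)).deriv.symm

end IsPlayOn

namespace IsPlayLoc

variable {r s a b t M : ℝ} {p ξ ξ' η η' : ℝ → ℝ}

theorem isPlayOn (hξ : IsPlayLoc r p ξ ξ') (ha : 0 ≤ a) (hb : 0 ≤ b) : IsPlayOn r p ξ a b := by
  obtain ⟨hξ', hξ_eq, hξ_bound, hξ_var, -⟩ := hξ
  have hT : 0 < a + b + 1 := by linarith
  have h_eq : ∀ t ∈ Icc 0 (a + b + 1), ξ t = ξ 0 + ∫ s in (0 : ℝ)..t, ξ' s :=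
    fun t ht => hξ_eq t ht.1
  suffices IsPlayOn r p ξ 0 (a + b + 1) from
    this.mono ⟨ha, by linarith⟩ ⟨hb, by linarith⟩
  refine ⟨absolutelyContinuousOnInterval_of_eq_add_integral (hξ' _ hT)
    (uIcc_of_le hT.le ▸ h_eq), fun t ht => hξ_bound t ht.1, ?_⟩
  filter_upwards [ae_hasDerivAt_of_eq_add_integral (hξ' _ hT) h_eq,
    (ae_restrict_iff' measurableSet_Ici).1 hξ_var] with t h_deriv h_var ht
  rw [(h_deriv ht).deriv]
  exact h_var ht.1.le

theorem continuousOn (hξ : IsPlayLoc r p ξ ξ') (hb : 0 ≤ b) : ContinuousOn ξ (Icc 0 b) :=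
  uIcc_of_le hb ▸ (hξ.isPlayOn le_rfl hb).absolutelyContinuous.continuousOn

theorem abs_zero_sub_zero_le (hξ : IsPlayLoc r p ξ ξ') (hη : IsPlayLoc s p η η') :
    |ξ 0 - η 0| ≤ |r - s| := by
  obtain ⟨-, -, -, -, hξ_init⟩ := hξ
  obtain ⟨-, -, -, -, hη_init⟩ := hη
  calc |ξ 0 - η 0| = |max (-s) (min (p 0) s) - max (-r) (min (p 0) r)| := by
        rw [← hξ_init, ← hη_init]; congr 1; ring
    _ ≤ max |-s - -r| |min (p 0) s - min (p 0) r| := abs_max_sub_max_le_max ..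
    _ ≤ max |-s - -r| (max |p 0 - p 0| |s - r|) :=
        max_le_max_left _ (abs_min_sub_min_le_max ..)
    _ = |r - s| := by
        rw [sub_self, abs_zero, max_eq_right (abs_nonneg (s - r)), neg_sub_neg, abs_sub_comm s r,
          max_self]

theorem abs_sub_le_abs_sub (hξ : IsPlayLoc r p ξ ξ') (hη : IsPlayLoc s p η η') (ht : 0 ≤ t) :
    |ξ t - η t| ≤ |r - s| :=
  (hξ.isPlayOn le_rfl ht).abs_sub_le_of_forall_add_le (hη.isPlayOn le_rfl ht) ht
    (fun u _ => by rw [sub_self, abs_zero, zero_add]) (hξ.abs_zero_sub_zero_le hη)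

theorem abs_zero_le (hξ : IsPlayLoc r p ξ ξ') : |ξ 0| ≤ |p 0| := by
  obtain ⟨-, -, h_bound, -, h_init⟩ := hξ
  have hr : 0 ≤ r := (abs_nonneg _).trans (h_bound 0 self_mem_Ici)
  rw [← sub_sub_cancel (p 0) (ξ 0), h_init]
  grind

theorem abs_le_of_forall_abs_le (hξ : IsPlayLoc r p ξ ξ') (ht : 0 ≤ t)
    (hp : ∀ u ∈ Icc 0 t, |p u| ≤ M) : |ξ t| ≤ M := by
  have hr : 0 ≤ r := (abs_nonneg _).trans (hξ.2.2.1 0 self_mem_Ici)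
  have h_zero : IsPlayOn r (fun _ => 0) (fun _ => 0) 0 t := .const (by simpa using hr)
  simpa using (hξ.isPlayOn le_rfl ht).abs_sub_le_of_forall_add_le h_zero ht
    (fun u hu => by simpa using hp u hu)
    (by simpa using hξ.abs_zero_le.trans (hp 0 ⟨le_rfl, ht⟩))

end IsPlayLoc

/-- The output `G_R[p]` of the Preisach operator whose density `a` depends on the memory parameter
only, in terms of the family `ξ r` of play outputs. -/
noncomputable def preisachOutput (a : ℝ → ℝ) (ξ : ℝ → ℝ → ℝ) (t : ℝ) : ℝ :=
  ∫ r in Ioi (0 : ℝ), a r * ξ r t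

section Preisach

theorem integral_integral_mul_nonpos {α β : Type*} [MeasurableSpace α] [MeasurableSpace β]
    {μ : Measure α} [SFinite μ] {ν : Measure β} [IsFiniteMeasure ν] {w : α → ℝ} {B : β → α → ℝ}
    {C : ℝ} (hw : Integrable w μ) (hw_nonneg : ∀ᵐ r ∂μ, 0 ≤ w r)
    (hB : AEStronglyMeasurable (Function.uncurry B) (ν.prod μ))
    (hB_le : ∀ᵐ z ∂ν.prod μ, ‖Function.uncurry B z‖ ≤ C) (h : ∀ᵐ r ∂μ, ∫ t, B t r ∂ν ≤ 0) :
    ∫ t, ∫ r, w r * B t r ∂μ ∂ν ≤ 0 := by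
  have h_int : Integrable (Function.uncurry fun t r => w r * B t r) (ν.prod μ) :=
    (hw.comp_snd ν).mul_bdd hB hB_le
  rw [integral_integral_swap h_int]
  refine integral_nonpos_of_ae ?_
  filter_upwards [hw_nonneg, h] with r hr_nonneg hr
  exact (integral_const_mul (w r) fun t => B t r).trans_le
    (mul_nonpos_of_nonneg_of_nonpos hr_nonneg hr)

variable {a p p' : ℝ → ℝ} {ξ ξ' : ℝ → ℝ → ℝ} {t α β γ : ℝ}

theorem lipschitzOnWith_play (hξ : ∀ r > 0, IsPlayLoc r p (ξ r) (ξ' r)) (ht : 0 ≤ t) :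
    LipschitzOnWith 1 (fun r => ξ r t) (Ioi 0) :=
  .of_dist_le_mul fun r hr s hs => by
    simpa [Real.dist_eq] using (hξ r hr).abs_sub_le_abs_sub (hξ s hs) ht

theorem continuousOn_play_prod (hγ : 0 ≤ γ) (hξ : ∀ r > 0, IsPlayLoc r p (ξ r) (ξ' r)) :
    ContinuousOn (fun z : ℝ × ℝ => ξ z.2 z.1) (Icc 0 γ ×ˢ Ioi 0) :=
  continuousOn_prod_of_continuousOn_lipschitzOnWith' _ 1 (fun _ ht => lipschitzOnWith_play hξ ht.1)
    fun r hr => (hξ r hr).continuousOn hγ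

theorem continuousOn_play_increment_prod {h : ℝ} (hα : 0 ≤ α) (hβ : 0 ≤ β) (hh : 0 ≤ h)
    (hξ : ∀ r > 0, IsPlayLoc r p (ξ r) (ξ' r)) :
    ContinuousOn (fun z : ℝ × ℝ => ξ z.2 (z.1 + h) - ξ z.2 z.1) (Icc α β ×ˢ Ioi 0) := by
  have hξ_cont := continuousOn_play_prod (add_nonneg hβ hh) hξ
  refine .sub (hξ_cont.comp (f := fun z : ℝ × ℝ => (z.1 + h, z.2)) (by fun_prop) fun z hz => ?_)
    (hξ_cont.mono fun z hz => ?_)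
  · exact ⟨⟨by linarith [hz.1.1], by linarith [hz.1.2]⟩, hz.2⟩
  · exact ⟨⟨hα.trans hz.1.1, by linarith [hz.1.2]⟩, hz.2⟩

theorem integrableOn_mul_play (ha : IntegrableOn a (Ioi 0)) (ht : 0 ≤ t)
    (hp : ContinuousOn p (Icc 0 t)) (hξ : ∀ r > 0, IsPlayLoc r p (ξ r) (ξ' r)) :
    IntegrableOn (fun r => a r * ξ r t) (Ioi 0) := by
  obtain ⟨M, hM⟩ := isCompact_Icc.exists_bound_of_continuousOn hp
  exact ha.mul_bdd
    ((lipschitzOnWith_play hξ ht).continuousOn.aestronglyMeasurable measurableSet_Ioi)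
    (ae_restrict_of_forall_mem measurableSet_Ioi fun r hr =>
      (hξ r hr).abs_le_of_forall_abs_le ht hM)

theorem preisachOutput_sub {u v : ℝ} (ha : IntegrableOn a (Ioi 0)) (hp : ContinuousOn p (Icc 0 γ))
    (hξ : ∀ r > 0, IsPlayLoc r p (ξ r) (ξ' r)) (hu : u ∈ Icc 0 γ) (hv : v ∈ Icc 0 γ) :
    preisachOutput a ξ u - preisachOutput a ξ v = ∫ r in Ioi (0 : ℝ), a r * (ξ r u - ξ r v) := by
  have h_int {t : ℝ} (ht : t ∈ Icc 0 γ) : IntegrableOn (fun r => a r * ξ r t) (Ioi 0) :=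
    integrableOn_mul_play ha ht.1 (hp.mono (Icc_subset_Icc_right ht.2)) hξ
  simp only [preisachOutput, mul_sub, integral_sub (h_int hu) (h_int hv)]

theorem lipschitzOnWith_preisachOutput {K : ℝ≥0} (ha : IntegrableOn a (Ioi 0)) (hα : 0 ≤ α)
    (hp : ContinuousOn p (Icc 0 γ)) (hp_lip : LipschitzOnWith K p (Icc α γ))
    (hξ : ∀ r > 0, IsPlayLoc r p (ξ r) (ξ' r)) :
    LipschitzOnWith ((∫ r in Ioi (0 : ℝ), ‖a r‖).toNNReal * K) (preisachOutput a ξ) (Icc α γ) := by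
  refine LipschitzOnWith.of_dist_le_mul fun u hu v hv => ?_
  have h_sub : Icc α γ ⊆ Icc 0 γ := Icc_subset_Icc_left hα
  have hγ : 0 ≤ γ := hα.trans (hu.1.trans hu.2)
  rw [dist_eq_norm, preisachOutput_sub ha hp hξ (h_sub hu) (h_sub hv), NNReal.coe_mul,
    Real.coe_toNNReal _ (integral_nonneg fun r => norm_nonneg _), mul_assoc, ← integral_mul_const]
  refine norm_integral_le_of_norm_le (ha.norm.mul_const _)
    (ae_restrict_of_forall_mem measurableSet_Ioi fun r hr => ?_)
  rw [norm_mul]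
  gcongr
  exact (((hξ r hr).isPlayOn hα hγ).lipschitzOnWith hp_lip).dist_le_mul u hu v hv

theorem integral_preisachOutput_increment_mul_nonpos {h : ℝ} (ha : IntegrableOn a (Ioi 0))
    (ha_nonneg : ∀ r > 0, 0 ≤ a r) (hα : 0 ≤ α) (hαβ : α ≤ β) (hh : 0 ≤ h)
    (hp : ContinuousOn p (Icc 0 (β + h)))
    (hp_ac : AbsolutelyContinuousOnInterval p α (β + h))
    (hp' : ∀ t ∈ Ioo α (β + h), HasDerivAt p (p' t) t)
    (hp'_cont : ContinuousOn p' (Icc α (β + h)))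
    (hp_per : p (β + h) - p β = p (α + h) - p α) (hξ : ∀ r > 0, IsPlayLoc r p (ξ r) (ξ' r))
    (hξ_per : ∀ r > 0, ξ r (β + h) - ξ r β = ξ r (α + h) - ξ r α) :
    ∫ t in α..β, (preisachOutput a ξ (t + h) - preisachOutput a ξ t) * (p' (t + h) - p' t) ≤ 0 := by
  obtain ⟨M, hM⟩ := isCompact_Icc.exists_bound_of_continuousOn hp
  obtain ⟨N, hN⟩ := isCompact_Icc.exists_bound_of_continuousOn hp'_cont
  have h_mem : MapsTo (fun t => t) (Ioc α β) (Icc α (β + h)) := fun t ht =>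
    ⟨ht.1.le, by linarith [ht.2]⟩
  have h_mem_shift : MapsTo (fun t => t + h) (Ioc α β) (Icc α (β + h)) := fun t ht =>
    ⟨by linarith [ht.1], by linarith [ht.2]⟩
  have h_sub : Icc α (β + h) ⊆ Icc 0 (β + h) := Icc_subset_Icc_left hα
  have hξ_le {r t : ℝ} (hr : 0 < r) (ht : t ∈ Icc α (β + h)) : ‖ξ r t‖ ≤ M :=
    (hξ r hr).abs_le_of_forall_abs_le (h_sub ht).1 fun u hu => hM u ⟨hu.1, hu.2.trans ht.2⟩
  have h_set : MeasurableSet (Ioc α β ×ˢ Ioi (0 : ℝ)) := measurableSet_Ioc.prod measurableSet_Ioi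
  rw [intervalIntegral.integral_of_le hαβ]
  refine (setIntegral_congr_fun measurableSet_Ioc fun t ht => ?_).trans_le
    (integral_integral_mul_nonpos (C := (M + M) * (N + N))
      (B := fun t r => (ξ r (t + h) - ξ r t) * (p' (t + h) - p' t)) ha
      (ae_restrict_of_forall_mem measurableSet_Ioi ha_nonneg) ?_ ?_ ?_)
  · rw [preisachOutput_sub ha hp hξ (h_sub (h_mem_shift ht)) (h_sub (h_mem ht)),
      ← integral_mul_const]
    simp only [mul_assoc]
  · rw [Measure.prod_restrict]
    refine ContinuousOn.aestronglyMeasurable ?_ h_set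
    refine .mul ?_ (.sub ?_ ?_)
    · exact (continuousOn_play_increment_prod hα (hα.trans hαβ) hh hξ).mono
        (prod_mono Ioc_subset_Icc_self subset_rfl)
    · exact hp'_cont.comp (f := fun z : ℝ × ℝ => z.1 + h) (by fun_prop) fun z hz => h_mem_shift hz.1
    · exact hp'_cont.comp continuousOn_fst fun z hz => h_mem hz.1
  · rw [Measure.prod_restrict]
    refine ae_restrict_of_forall_mem h_set fun z hz => ?_
    rw [Function.uncurry, norm_mul]
    refine mul_le_mul (norm_sub_le_of_le (hξ_le hz.2 (h_mem_shift hz.1)) (hξ_le hz.2 (h_mem hz.1)))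
      (norm_sub_le_of_le (hN _ (h_mem_shift hz.1)) (hN _ (h_mem hz.1))) (norm_nonneg _) ?_
    have hM_nonneg := (norm_nonneg _).trans (hξ_le hz.2 (h_mem hz.1))
    positivity
  · refine ae_restrict_of_forall_mem measurableSet_Ioi fun r hr => ?_
    rw [← intervalIntegral.integral_of_le hαβ]
    exact ((hξ r hr).isPlayOn hα (by linarith)).integral_increment_mul_nonpos hp_ac hp' hαβ hh
      (hξ_per r hr) hp_per

theorem integral_deriv_preisachOutput_mul_deriv_nonpos (ha : IntegrableOn a (Ioi 0))
    (ha_nonneg : ∀ r > 0, 0 ≤ a r) (hα : 0 ≤ α) (hαβ : α ≤ β) (hβγ : β < γ)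
    (hp : ContinuousOn p (Icc 0 γ))
    (hp' : ∀ t ∈ Icc α γ, HasDerivWithinAt p (p' t) (Icc α γ) t)
    (hp'_ac : AbsolutelyContinuousOnInterval p' α γ)
    (hp_per : ∀ h ∈ Icc 0 (γ - β), p (β + h) = p (α + h))
    (hξ : ∀ r > 0, IsPlayLoc r p (ξ r) (ξ' r))
    (hξ_per : ∀ r > 0, ∀ h ∈ Icc 0 (γ - β), ξ r (β + h) = ξ r (α + h)) :
    ∫ t in α..β, deriv (preisachOutput a ξ) t * deriv p' t ≤ 0 := by
  have hαγ : α ≤ γ := hαβ.trans hβγ.le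
  have hp'_cont : ContinuousOn p' (Icc α γ) := uIcc_of_le hαγ ▸ hp'_ac.continuousOn
  obtain ⟨L, hL⟩ := isCompact_Icc.exists_bound_of_continuousOn hp'_cont
  have hp_lip : LipschitzOnWith L.toNNReal p (Icc α γ) :=
    (convex_Icc α γ).lipschitzOnWith_of_nnnorm_hasDerivWithin_le
      hp' fun t ht => NNReal.le_toNNReal_of_coe_le (hL t ht)
  refine integral_deriv_mul_deriv_nonpos hαβ hβγ
    (lipschitzOnWith_preisachOutput ha hα hp hp_lip hξ) hp'_ac fun h hh => ?_
  have h_per {f : ℝ → ℝ} (hf : ∀ h ∈ Icc 0 (γ - β), f (β + h) = f (α + h)) :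
      f (β + h) - f β = f (α + h) - f α := by
    have hf_zero := hf 0 ⟨le_rfl, by linarith⟩
    rw [add_zero, add_zero] at hf_zero
    rw [hf h (Ioc_subset_Icc_self hh), hf_zero]
  have h_sub : Icc α (β + h) ⊆ Icc α γ := Icc_subset_Icc_right (by linarith [hh.2])
  exact integral_preisachOutput_increment_mul_nonpos ha ha_nonneg hα hαβ hh.1.le
    (hp.mono (Icc_subset_Icc_right (by linarith [hh.2])))
    (uIcc_of_le (by linarith [hh.1] : α ≤ β + h) ▸
      hp_lip.mono h_sub).absolutelyContinuousOnInterval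
    (fun t ht => (hp' t (h_sub (Ioo_subset_Icc_self ht))).hasDerivAt
      (Icc_mem_nhds ht.1 (by linarith [ht.2, hh.2]))) (hp'_cont.mono h_sub) (h_per hp_per) hξ
    fun r hr => h_per (hξ_per r hr)

theorem preisach_second_order_inequality_general {p'' G' : ℝ → ℝ} {τ : ℝ}
    (ha : IntegrableOn a (Ioi 0)) (ha_nonneg : ∀ r > 0, 0 ≤ a r) (hα : 0 ≤ α) (hτ : 0 ≤ τ)
    (hp : ∀ t ∈ Ici 0, p t = p 0 + ∫ s in (0 : ℝ)..t, p' s)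
    (hp'' : ∀ T > 0, IntervalIntegrable p'' volume 0 T)
    (hp' : ∀ t ∈ Ici 0, p' t = p' 0 + ∫ s in (0 : ℝ)..t, p'' s)
    (hp_per : ∀ t ∈ Ici α, p (t + τ) = p t)
    (hξ : ∀ r > 0, IsPlayLoc r p (ξ r) (ξ' r))
    (hξ_per : ∀ r > 0, ∀ t ∈ Ici α, ξ r (t + τ) = ξ r t)
    (hG' : IntervalIntegrable G' volume α (α + τ))
    (hG : ∀ t ∈ Icc α (α + τ),
      preisachOutput a ξ t = preisachOutput a ξ α + ∫ s in α..t, G' s) :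
    0 ≤ -∫ t in α..α + τ, G' t * p'' t := by
  have hT : 0 < α + τ + 1 := by positivity
  have hp_eq : ∀ t ∈ Icc 0 (α + τ + 1), p t = p 0 + ∫ s in (0 : ℝ)..t, p' s :=
    fun t ht => hp t ht.1
  have hp'_eq : ∀ t ∈ Icc 0 (α + τ + 1), p' t = p' 0 + ∫ s in (0 : ℝ)..t, p'' s :=
    fun t ht => hp' t ht.1
  have hp'_ac : AbsolutelyContinuousOnInterval p' 0 (α + τ + 1) :=
    absolutelyContinuousOnInterval_of_eq_add_integral (hp'' _ hT) (uIcc_of_le hT.le ▸ hp'_eq)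
  have hp_deriv : ∀ t ∈ Icc 0 (α + τ + 1), HasDerivWithinAt p (p' t) (Icc 0 (α + τ + 1)) t :=
    fun t ht =>
      hasDerivWithinAt_of_eq_add_integral (uIcc_of_le hT.le ▸ hp'_ac.continuousOn) hp_eq ht
  have hp'_deriv : ∀ᵐ t, t ∈ Ioo α (α + τ) → HasDerivAt p' (p'' t) t :=
    (ae_hasDerivAt_of_eq_add_integral (hp'' _ hT) hp'_eq).mono fun t h ht =>
      h (Ioo_subset_Ioo hα (by linarith) ht)
  have h_per {f : ℝ → ℝ} (hf : ∀ t ∈ Ici α, f (t + τ) = f t) (h : ℝ)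
      (hh : h ∈ Icc 0 (α + τ + 1 - (α + τ))) : f (α + τ + h) = f (α + h) := by
    rw [add_right_comm, hf (α + h) (le_add_of_nonneg_right hh.1)]
  have h_sub : Icc α (α + τ + 1) ⊆ Icc 0 (α + τ + 1) := Icc_subset_Icc_left hα
  rw [neg_nonneg, ← integral_deriv_mul_deriv_eq (le_add_of_nonneg_right hτ)
    (ae_hasDerivAt_of_eq_add_integral hG' hG) hp'_deriv]
  exact integral_deriv_preisachOutput_mul_deriv_nonpos ha ha_nonneg hα (le_add_of_nonneg_right hτ)
    (lt_add_one _) (HasDerivWithinAt.continuousOn hp_deriv)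
    (fun t ht => (hp_deriv t (h_sub ht)).mono h_sub)
    (hp'_ac.mono (uIcc_subset_uIcc_right (Icc_subset_uIcc ⟨hα, by linarith⟩)))
    (h_per hp_per) hξ fun r hr => h_per (hξ_per r hr)

end Preisach

end

/-- Second-order (convexity) energy inequality for the truncated Preisach operator in the
simplest case of a density constant in `v`: with `G_R[p](t) = ∫₀^∞ a(r)·𝔭_r[p](t) dr`,
`a ≥ 0`, and `2π`-periodic `p ∈ W^{2,1}_per`, one has `−∫_{2π}^{4π} G_R[p]_t p_tt dt ≥ 0`. -/
theorem preisach_second_order_inequality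
    (a : ℝ → ℝ) (ha0 : ∀ r, 0 ≤ a r) (ha : IntegrableOn a (Set.Ioi 0) volume)
    (p p' p'' : ℝ → ℝ)
    (hp' : ∀ T > (0:ℝ), IntervalIntegrable p' volume 0 T)
    (hp'' : ∀ T > (0:ℝ), IntervalIntegrable p'' volume 0 T)
    (hp : ∀ t ∈ Set.Ici (0:ℝ), p t = p 0 + ∫ s in (0:ℝ)..t, p' s)
    (hpd : ∀ t ∈ Set.Ici (0:ℝ), p' t = p' 0 + ∫ s in (0:ℝ)..t, p'' s)
    (hper : ∀ t ∈ Set.Ici (0:ℝ), p (t + 2 * Real.pi) = p t)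
    (hper' : ∀ t ∈ Set.Ici (0:ℝ), p' (t + 2 * Real.pi) = p' t)
    -- the family of play outputs `ξ r = 𝔭_r[p]` with a.e. derivatives `ξ' r`,
    -- `2π`-periodic from time `2π` on:
    (ξ ξ' : ℝ → ℝ → ℝ) (hξ : ∀ r > (0:ℝ), IsPlayLoc r p (ξ r) (ξ' r))
    (hξper : ∀ r > (0:ℝ), ∀ t ∈ Set.Ici (2 * Real.pi), ξ r (t + 2 * Real.pi) = ξ r t)
    -- `G'` is the a.e. time derivative of `G_R[p] : t ↦ ∫₀^∞ a(r)·ξ r t dr`: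
    (G' : ℝ → ℝ) (hG'int : IntervalIntegrable G' volume (2 * Real.pi) (4 * Real.pi))
    (hGrep : ∀ t ∈ Set.Ici (2 * Real.pi),
        (∫ r in Set.Ioi (0:ℝ), a r * ξ r t) =
        (∫ r in Set.Ioi (0:ℝ), a r * ξ r (2 * Real.pi)) +
          ∫ s in (2 * Real.pi)..t, G' s) :
    0 ≤ -∫ t in (2 * Real.pi)..(4 * Real.pi), G' t * p'' t := by
  have h_end : 4 * Real.pi = 2 * Real.pi + 2 * Real.pi := by ring
  rw [h_end] at hG'int ⊢
  exact preisach_second_order_inequality_general ha (fun r _ => ha0 r) Real.two_pi_pos.le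
    Real.two_pi_pos.le hp hp'' hpd (fun t ht => hper t (Real.two_pi_pos.le.trans ht)) hξ hξper
    hG'int fun t ht => hGrep t ht.1
end

section
/- The Preisach energy identity: for every p ∈ W^{1,1}(0,T), the equality G[p]'(t) · p(t) − V[p]'(t) = |D[p]'(t)| holds for almost every t ∈ (0,T), where V[p](t) = ∫₀^∞ ∫₀^{𝔭_r[p](t)} v ρ(r,v) dv dr and D[p](t) = ∫₀^∞ ∫₀^{𝔭_r[p](t)} r ρ(r,v) dv dr. -/
open MeasureTheory Set

/-- `IsPlay T r p ξ ξ'` says that `ξ ∈ W^{1,1}(0,T)` (with a.e. derivative `ξ'`) solves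
the play variational inequality with input `p` and memory parameter `r`. -/
def IsPlay (T r : ℝ) (p ξ ξ' : ℝ → ℝ) : Prop :=
  IntervalIntegrable ξ' volume 0 T ∧
  (∀ t ∈ Set.Icc 0 T, ξ t = ξ 0 + ∫ s in (0:ℝ)..t, ξ' s) ∧
  (∀ t ∈ Set.Icc 0 T, |p t - ξ t| ≤ r) ∧
  (∀ᵐ t ∂(volume.restrict (Set.Icc 0 T)),
      ∀ z ∈ Set.Icc (-r) r, 0 ≤ ξ' t * (p t - ξ t - z)) ∧
  p 0 - ξ 0 = max (-r) (min (p 0) r)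

/-!
Let `t` be a time at which `p`, `G[p]`, `V[p]` and `D[p]` are all differentiable. Between `t` and
a later time `s`, no point of the curve `r ↦ 𝔭_r[p]` moves by more than the oscillation of `p` on
`[t, s]`, which is `O(s - t)`.

If `p'(t) = 0`, this displacement is `o(s - t)`, so the derivatives of `G[p]`, `V[p]` and `D[p]`
at `t` all vanish. Otherwise let `σ` be the sign of `p'(t)`. As `s ↓ t`, the whole curve moves in
the direction `σ`, and it can only sweep over points `(r, v)` close to the line
`p(t) - v - σ r = 0` on which the play operators yield. The Preisach integral with weight
`p(t) - v - σ r` therefore has derivative zero at `t`, which says `p G[p]' - V[p]' = σ D[p]'`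
there; and `σ D[p]' ≥ 0` because the curve moves monotonically.
-/

open Filter Topology
open scoped Interval

lemma eventually_forall_Icc {P : ℝ → Prop} {t : ℝ} (h : ∀ᶠ τ in 𝓝[≥] t, P τ) :
    ∀ᶠ s in 𝓝[≥] t, ∀ τ ∈ Icc t s, P τ := by
  obtain ⟨u, hu, hsub⟩ := mem_nhdsGE_iff_exists_Ico_subset.1 h
  filter_upwards [Ico_mem_nhdsGE hu] with s hs τ hτ
  exact hsub ⟨hτ.1, hτ.2.trans_lt hs.2⟩

lemma eventually_forall_Icc_abs_sub_le {f : ℝ → ℝ} {t η : ℝ}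
    (hf : ContinuousWithinAt f (Ici t) t) (hη : 0 < η) :
    ∀ᶠ s in 𝓝[>] t, ∀ τ ∈ Icc t s, |f τ - f t| ≤ η :=
  nhdsWithin_mono t Ioi_subset_Ici_self <| eventually_forall_Icc <|
    (Metric.tendsto_nhds.1 hf η hη).mono fun _ hτ => le_of_lt hτ

lemma eventually_forall_abs_sub_le {f : ℝ → ℝ} {f' t C : ℝ}
    (hf : HasDerivWithinAt f f' (Ici t) t) (hC : |f'| < C) :
    ∀ᶠ s in 𝓝[>] t, ∀ τ ∈ Icc t s, |f τ - f t| ≤ C * (s - t) := by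
  have hC0 : 0 < C := (abs_nonneg f').trans_lt hC
  have hlip : ∀ᶠ τ in 𝓝[≥] t, |f τ - f t| ≤ C * (τ - t) := by
    filter_upwards [hf.limsup_norm_slope_le hC, self_mem_nhdsWithin] with τ hτ htτ
    rcases (mem_Ici.1 htτ).eq_or_lt with rfl | hlt
    · simp
    · have hpos : 0 < τ - t := sub_pos.2 hlt
      rw [Real.norm_eq_abs, Real.norm_eq_abs, abs_of_pos hpos, inv_mul_lt_iff₀ hpos] at hτ
      linarith
  filter_upwards [nhdsWithin_mono t Ioi_subset_Ici_self (eventually_forall_Icc hlip)]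
    with s hs τ hτ
  have hτs : τ - t ≤ s - t := sub_le_sub_right hτ.2 t
  exact (hs τ hτ).trans (mul_le_mul_of_nonneg_left hτs hC0.le)

lemma eventually_forall_le_of_deriv_pos {f : ℝ → ℝ} {f' t : ℝ}
    (hf : HasDerivWithinAt f f' (Ioi t) t) (hf' : 0 < f') :
    ∀ᶠ s in 𝓝[>] t, ∀ τ ∈ Icc t s, f t ≤ f τ := by
  have hslope := (hasDerivWithinAt_iff_tendsto_slope' self_notMem_Ioi).1 hf
  have hle : ∀ᶠ τ in 𝓝[≥] t, f t ≤ f τ := by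
    rw [← Ioi_insert]
    refine mem_nhdsWithin_insert.2 ⟨le_refl (f t), ?_⟩
    filter_upwards [hslope.eventually_const_lt hf', self_mem_nhdsWithin] with τ hτ htτ
    rw [slope_def_field, div_pos_iff_of_pos_right (sub_pos.2 htτ), sub_pos] at hτ
    exact hτ.le
  exact nhdsWithin_mono t Ioi_subset_Ici_self (eventually_forall_Icc hle)

lemma abs_deriv_le_of_eventually_abs_sub_le {f : ℝ → ℝ} {f' t C : ℝ}
    (hf : HasDerivWithinAt f f' (Ioi t) t)
    (hC : ∀ᶠ s in 𝓝[>] t, |f s - f t| ≤ C * (s - t)) : |f'| ≤ C := by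
  refine le_of_tendsto ((hasDerivWithinAt_iff_tendsto_slope' self_notMem_Ioi).1 hf).abs ?_
  filter_upwards [hC, self_mem_nhdsWithin] with s hs hts
  have hpos : 0 < s - t := sub_pos.2 hts
  rwa [slope_def_field, abs_div, abs_of_pos hpos, div_le_iff₀ hpos]

lemma deriv_nonneg_of_eventually_le {f : ℝ → ℝ} {f' t : ℝ}
    (hf : HasDerivWithinAt f f' (Ioi t) t) (h : ∀ᶠ s in 𝓝[>] t, f t ≤ f s) : 0 ≤ f' := by
  refine ge_of_tendsto ((hasDerivWithinAt_iff_tendsto_slope' self_notMem_Ioi).1 hf) ?_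
  filter_upwards [h, self_mem_nhdsWithin] with s hs hts
  rw [slope_def_field]
  exact div_nonneg (sub_nonneg.2 hs) (sub_nonneg.2 (le_of_lt hts))

lemma eq_zero_of_forall_pos_abs_le_mul {a b : ℝ} (h : ∀ η > 0, |a| ≤ η * b) : a = 0 := by
  have hlim : Tendsto (fun η : ℝ => η * b) (𝓝[>] 0) (𝓝 (0 * b)) :=
    tendsto_nhdsWithin_of_tendsto_nhds (tendsto_id.mul_const b)
  rw [zero_mul] at hlim
  exact abs_nonpos_iff.1 (ge_of_tendsto hlim (eventually_mem_nhdsWithin.mono h))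

/-- `f` is the continuous representative of a function in `W^{1,1}(0,T)` with a.e. derivative
`f'`, encoded by the fundamental theorem of calculus. -/
structure IsPrimitiveOn (T : ℝ) (f f' : ℝ → ℝ) : Prop where
  intervalIntegrable : IntervalIntegrable f' volume 0 T
  eq_add_integral : ∀ t ∈ Icc 0 T, f t = f 0 + ∫ s in (0 : ℝ)..t, f' s

namespace IsPrimitiveOn

variable {T : ℝ} {f f' g g' : ℝ → ℝ}

lemma intervalIntegrable_of_mem (hf : IsPrimitiveOn T f f') {a b : ℝ} (ha : a ∈ Icc 0 T)
    (hb : b ∈ Icc 0 T) : IntervalIntegrable f' volume a b :=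
  hf.intervalIntegrable.mono_set (uIcc_subset_uIcc (Icc_subset_uIcc ha) (Icc_subset_uIcc hb))

lemma neg (hf : IsPrimitiveOn T f f') : IsPrimitiveOn T (-f) (-f') where
  intervalIntegrable := hf.intervalIntegrable.neg
  eq_add_integral t ht := by
    simp only [Pi.neg_apply, intervalIntegral.integral_neg, hf.eq_add_integral t ht, neg_add]

lemma sub (hf : IsPrimitiveOn T f f') (hg : IsPrimitiveOn T g g') :
    IsPrimitiveOn T (f - g) (f' - g') where
  intervalIntegrable := hf.intervalIntegrable.sub hg.intervalIntegrable
  eq_add_integral t ht := by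
    have h0 : (0 : ℝ) ∈ Icc 0 T := left_mem_Icc.2 (ht.1.trans ht.2)
    simp only [Pi.sub_apply, intervalIntegral.integral_sub (hf.intervalIntegrable_of_mem h0 ht)
      (hg.intervalIntegrable_of_mem h0 ht), hf.eq_add_integral t ht, hg.eq_add_integral t ht]
    ring

lemma sub_eq_integral (hf : IsPrimitiveOn T f f') {a b : ℝ} (ha : a ∈ Icc 0 T)
    (hb : b ∈ Icc 0 T) : f b - f a = ∫ s in a..b, f' s := by
  have h0 : (0 : ℝ) ∈ Icc 0 T := left_mem_Icc.2 (ha.1.trans ha.2)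
  rw [hf.eq_add_integral a ha, hf.eq_add_integral b hb, add_sub_add_left_eq_sub,
    intervalIntegral.integral_interval_sub_left (hf.intervalIntegrable_of_mem h0 hb)
      (hf.intervalIntegrable_of_mem h0 ha)]

lemma continuousOn (hf : IsPrimitiveOn T f f') : ContinuousOn f (Icc 0 T) := by
  have h := intervalIntegral.continuousOn_primitive_interval' hf.intervalIntegrable left_mem_uIcc
  exact (continuousOn_const.add (h.mono Icc_subset_uIcc)).congr hf.eq_add_integral

lemma ae_hasDerivAt (hf : IsPrimitiveOn T f f') :
    ∀ᵐ t ∂(volume.restrict (Ioo 0 T)), HasDerivAt f (f' t) t := by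
  rw [ae_restrict_iff' measurableSet_Ioo]
  filter_upwards [hf.intervalIntegrable.ae_hasDerivAt_integral] with t ht htT
  have hderiv := (ht (Icc_subset_uIcc (Ioo_subset_Icc_self htT)) 0 left_mem_uIcc).const_add (f 0)
  refine hderiv.congr_of_eventuallyEq ?_
  filter_upwards [Icc_mem_nhds htT.1 htT.2] with s hs using hf.eq_add_integral s hs

lemma le_of_ae_deriv_nonpos_above (hf : IsPrimitiveOn T f f') {a b c : ℝ} (ha : 0 ≤ a)
    (hab : a ≤ b) (hb : b ≤ T)
    (hneg : ∀ᵐ t ∂(volume.restrict (Icc a b)), c < f t → f' t ≤ 0) (hc : f a ≤ c) : f b ≤ c := by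
  have hsub : Icc a b ⊆ Icc 0 T := Icc_subset_Icc ha hb
  have hcompact : IsCompact (Icc a b ∩ f ⁻¹' Iic c) :=
    isCompact_Icc.of_isClosed_subset
      ((hf.continuousOn.mono hsub).preimage_isClosed_of_isClosed isClosed_Icc isClosed_Iic)
      inter_subset_left
  -- After the last time `m` at which `f ≤ c`, the function `f` is nonincreasing.
  obtain ⟨m, ⟨hm, hmc⟩, hmax⟩ := hcompact.exists_isGreatest ⟨a, left_mem_Icc.2 hab, hc⟩
  have hint : ∫ s in m..b, f' s ≤ 0 := by
    rw [intervalIntegral.integral_of_le hm.2]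
    refine integral_nonpos_of_ae ?_
    have hsub' : Ioc m b ⊆ Icc a b := fun s hs => ⟨hm.1.trans hs.1.le, hs.2⟩
    filter_upwards [ae_restrict_of_ae_restrict_of_subset hsub' hneg,
      ae_restrict_mem measurableSet_Ioc] with s hs hsm
    exact hs (not_le.1 fun hle => (hmax ⟨hsub' hsm, hle⟩).not_gt hsm.1)
  rw [← hf.sub_eq_integral (hsub hm) (hsub (right_mem_Icc.2 hab)), sub_nonpos] at hint
  exact hint.trans hmc

end IsPrimitiveOn

namespace IsPlay

variable {T r q : ℝ} {p ξ ξ' η η' : ℝ → ℝ}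

lemma isPrimitiveOn (h : IsPlay T r p ξ ξ') : IsPrimitiveOn T ξ ξ' := ⟨h.1, h.2.1⟩

lemma abs_input_sub_le (h : IsPlay T r p ξ ξ') {t : ℝ} (ht : t ∈ Icc 0 T) : |p t - ξ t| ≤ r :=
  h.2.2.1 t ht

lemma initial_eq (h : IsPlay T r p ξ ξ') : p 0 - ξ 0 = max (-r) (min (p 0) r) := h.2.2.2.2

lemma ae_deriv_nonpos (h : IsPlay T r p ξ ξ') :
    ∀ᵐ t ∂(volume.restrict (Icc 0 T)), p t - ξ t < r → ξ' t ≤ 0 := by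
  filter_upwards [h.2.2.2.1, ae_restrict_mem measurableSet_Icc] with t hvar ht hlt
  have hr : 0 ≤ r := (abs_nonneg _).trans (h.abs_input_sub_le ht)
  exact nonpos_of_mul_nonneg_left (hvar r ⟨by linarith, le_rfl⟩) (sub_neg.2 hlt)

lemma ae_deriv_nonneg (h : IsPlay T r p ξ ξ') :
    ∀ᵐ t ∂(volume.restrict (Icc 0 T)), -r < p t - ξ t → 0 ≤ ξ' t := by
  filter_upwards [h.2.2.2.1, ae_restrict_mem measurableSet_Icc] with t hvar ht hlt
  have hr : 0 ≤ r := (abs_nonneg _).trans (h.abs_input_sub_le ht)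
  exact nonneg_of_mul_nonneg_left (hvar (-r) ⟨le_rfl, by linarith⟩) (sub_pos.2 hlt)

lemma le_of_input_le (h : IsPlay T r p ξ ξ') {a b c : ℝ} (ha : 0 ≤ a) (hab : a ≤ b) (hb : b ≤ T)
    (hc : ξ a ≤ c) (hp : ∀ τ ∈ Icc a b, p τ ≤ c + r) : ξ b ≤ c := by
  refine h.isPrimitiveOn.le_of_ae_deriv_nonpos_above ha hab hb ?_ hc
  filter_upwards [ae_restrict_of_ae_restrict_of_subset (Icc_subset_Icc ha hb) h.ae_deriv_nonpos,
    ae_restrict_mem measurableSet_Icc] with τ hξ' hτ hlt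
  exact hξ' (by linarith [hp τ hτ])

lemma ge_of_input_ge (h : IsPlay T r p ξ ξ') {a b c : ℝ} (ha : 0 ≤ a) (hab : a ≤ b) (hb : b ≤ T)
    (hc : c ≤ ξ a) (hp : ∀ τ ∈ Icc a b, c - r ≤ p τ) : c ≤ ξ b := by
  refine neg_le_neg_iff.1
    (h.isPrimitiveOn.neg.le_of_ae_deriv_nonpos_above ha hab hb ?_ (neg_le_neg hc))
  filter_upwards [ae_restrict_of_ae_restrict_of_subset (Icc_subset_Icc ha hb) h.ae_deriv_nonneg,
    ae_restrict_mem measurableSet_Icc] with τ hξ' hτ hlt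
  have hlt' : ξ τ < c := neg_lt_neg_iff.1 hlt
  exact neg_nonpos.2 (hξ' (by linarith [hp τ hτ]))

lemma eq_zero_of_abs_input_le (h : IsPlay T r p ξ ξ') {t : ℝ} (ht : t ∈ Icc 0 T)
    (hp : ∀ τ ∈ Icc 0 t, |p τ| ≤ r) : ξ t = 0 := by
  have hp0 := abs_le.1 (hp 0 (left_mem_Icc.2 ht.1))
  have hξ0 : ξ 0 = 0 := by
    have := h.initial_eq
    rw [min_eq_left hp0.2, max_eq_right hp0.1] at this
    linarith
  exact le_antisymm
    (h.le_of_input_le le_rfl ht.1 ht.2 hξ0.le fun τ hτ => by linarith [abs_le.1 (hp τ hτ)])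
    (h.ge_of_input_ge le_rfl ht.1 ht.2 hξ0.ge fun τ hτ => by linarith [abs_le.1 (hp τ hτ)])

lemma sub_le_abs_sub (h : IsPlay T r p ξ ξ') (k : IsPlay T q p η η') {t : ℝ}
    (ht : t ∈ Icc 0 T) : ξ t - η t ≤ |r - q| := by
  have hrq := abs_le.1 (le_refl |r - q|)
  refine (h.isPrimitiveOn.sub k.isPrimitiveOn).le_of_ae_deriv_nonpos_above le_rfl ht.1 ht.2 ?_ ?_
  · have hsub : Icc 0 t ⊆ Icc 0 T := Icc_subset_Icc_right ht.2
    filter_upwards [ae_restrict_of_ae_restrict_of_subset hsub h.ae_deriv_nonpos,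
      ae_restrict_of_ae_restrict_of_subset hsub k.ae_deriv_nonneg,
      ae_restrict_mem measurableSet_Icc] with τ hξ' hη' hτ hlt
    simp only [Pi.sub_apply] at hlt ⊢
    have hξ := abs_le.1 (h.abs_input_sub_le (hsub hτ))
    have hη := abs_le.1 (k.abs_input_sub_le (hsub hτ))
    exact sub_nonpos.2 ((hξ' (by linarith)).trans (hη' (by linarith)))
  · have hclamp : max (-q) (min (p 0) q) - max (-r) (min (p 0) r) ≤ |r - q| := by grind
    rw [← h.initial_eq, ← k.initial_eq, sub_sub_sub_cancel_left] at hclamp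
    exact hclamp

section Increment

variable {t s ε v : ℝ}

lemma abs_sub_le (h : IsPlay T r p ξ ξ') (ht : 0 ≤ t) (hts : t ≤ s) (hs : s ≤ T)
    (hε : ∀ τ ∈ Icc t s, |p τ - p t| ≤ ε) : |ξ s - ξ t| ≤ ε := by
  have hξ := abs_le.1 (h.abs_input_sub_le ⟨ht, hts.trans hs⟩)
  have hε0 : 0 ≤ ε := (abs_nonneg _).trans (hε t (left_mem_Icc.2 hts))
  have hup : ξ s ≤ ξ t + ε := h.le_of_input_le ht hts hs (by linarith)
    fun τ hτ => by linarith [abs_le.1 (hε τ hτ)]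
  have hlo : ξ t - ε ≤ ξ s := h.ge_of_input_ge ht hts hs (by linarith)
    fun τ hτ => by linarith [abs_le.1 (hε τ hτ)]
  exact abs_le.2 ⟨by linarith, by linarith⟩

lemma le_of_forall_input_le (h : IsPlay T r p ξ ξ') (ht : 0 ≤ t) (hts : t ≤ s) (hs : s ≤ T)
    (hp : ∀ τ ∈ Icc t s, p t ≤ p τ) : ξ t ≤ ξ s :=
  h.ge_of_input_ge ht hts hs le_rfl fun τ hτ => by
    linarith [hp τ hτ, abs_le.1 (h.abs_input_sub_le ⟨ht, hts.trans hs⟩)]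

lemma ge_of_forall_input_ge (h : IsPlay T r p ξ ξ') (ht : 0 ≤ t) (hts : t ≤ s) (hs : s ≤ T)
    (hp : ∀ τ ∈ Icc t s, p τ ≤ p t) : ξ s ≤ ξ t :=
  h.le_of_input_le ht hts hs le_rfl fun τ hτ => by
    linarith [hp τ hτ, abs_le.1 (h.abs_input_sub_le ⟨ht, hts.trans hs⟩)]

lemma abs_input_sub_sub_le (h : IsPlay T r p ξ ξ') (ht : 0 ≤ t) (hts : t ≤ s) (hs : s ≤ T)
    (hε : ∀ τ ∈ Icc t s, |p τ - p t| ≤ ε) (hv : v ∈ Ioc (ξ t) (ξ s)) : |p t - v - r| ≤ ε := by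
  have hξ := abs_le.1 (h.abs_input_sub_le ⟨ht, hts.trans hs⟩)
  have hε0 : 0 ≤ ε := (abs_nonneg _).trans (hε t (left_mem_Icc.2 hts))
  have hup : ξ s ≤ max (ξ t) (p t + ε - r) := h.le_of_input_le ht hts hs (le_max_left _ _)
    fun τ hτ => by linarith [abs_le.1 (hε τ hτ), le_max_right (ξ t) (p t + ε - r)]
  have hvp : v ≤ p t + ε - r := (le_max_iff.1 (hv.2.trans hup)).resolve_left hv.1.not_ge
  exact abs_le.2 ⟨by linarith, by linarith [hv.1, hε0]⟩

lemma abs_input_sub_add_le (h : IsPlay T r p ξ ξ') (ht : 0 ≤ t) (hts : t ≤ s) (hs : s ≤ T)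
    (hε : ∀ τ ∈ Icc t s, |p τ - p t| ≤ ε) (hv : v ∈ Ioc (ξ s) (ξ t)) : |p t - v + r| ≤ ε := by
  have hξ := abs_le.1 (h.abs_input_sub_le ⟨ht, hts.trans hs⟩)
  have hε0 : 0 ≤ ε := (abs_nonneg _).trans (hε t (left_mem_Icc.2 hts))
  have hlo : min (ξ t) (p t - ε + r) ≤ ξ s := h.ge_of_input_ge ht hts hs (min_le_left _ _)
    fun τ hτ => by linarith [abs_le.1 (hε τ hτ), min_le_right (ξ t) (p t - ε + r)]
  have hvp : p t - ε + r < v :=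
    (min_lt_iff.1 (hlo.trans_lt hv.1)).resolve_left hv.2.not_gt
  exact abs_le.2 ⟨by linarith [hv.2, hε0], by linarith⟩

end Increment

end IsPlay

/-- The half-plane region `0 ≤ r ≤ M`, `|v| ≤ M` containing every Preisach integration domain
of a memory curve in `IsMemoryCurve M`. -/
def memoryBox (M : ℝ) : Set (ℝ × ℝ) := Icc 0 M ×ˢ Icc (-M) M

/-- The memory configurations `r ↦ 𝔭_r[p](t)` of the play family under inputs with `|p| ≤ M`:
functions on `(0,∞)` that are `1`-Lipschitz and vanish for `r ≥ M`. -/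
structure IsMemoryCurve (M : ℝ) (x : ℝ → ℝ) : Prop where
  lipschitzOnWith : LipschitzOnWith 1 x (Ioi 0)
  eq_zero : ∀ r > 0, M ≤ r → x r = 0

lemma IsPlay.isMemoryCurve {T M t : ℝ} {p : ℝ → ℝ} {ξ ξ' : ℝ → ℝ → ℝ}
    (hξ : ∀ r > 0, IsPlay T r p (ξ r) (ξ' r)) (hp : ∀ τ ∈ Icc 0 T, |p τ| ≤ M)
    (ht : t ∈ Icc 0 T) : IsMemoryCurve M fun r => ξ r t where
  lipschitzOnWith := LipschitzOnWith.of_dist_le_mul fun r hr q hq => by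
    rw [NNReal.coe_one, one_mul, Real.dist_eq, Real.dist_eq, abs_sub_le_iff]
    exact ⟨(hξ r hr).sub_le_abs_sub (hξ q hq) ht,
      abs_sub_comm r q ▸ (hξ q hq).sub_le_abs_sub (hξ r hr) ht⟩
  eq_zero r hr hMr := (hξ r hr).eq_zero_of_abs_input_le ht fun τ hτ =>
    (hp τ ⟨hτ.1, hτ.2.trans ht.2⟩).trans hMr

section SetIntegralIoc

variable {α : Type*} [MeasurableSpace α] {μ : Measure α} {k : α → ℝ → ℝ} {f g : α → ℝ}

lemma integrable_indicator_Ioc (hf : AEMeasurable f μ) (hg : AEMeasurable g μ)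
    (hk : IntegrableOn (Function.uncurry k) {z | z.2 ∈ Ioc (f z.1) (g z.1)} (μ.prod volume)) :
    Integrable (fun z : α × ℝ => (Ioc (f z.1) (g z.1)).indicator (k z.1) z.2)
      (μ.prod volume) := by
  have hregion : NullMeasurableSet {z : α × ℝ | z.2 ∈ Ioc (f z.1) (g z.1)} (μ.prod volume) := by
    simpa only [mem_univ, true_and]
      using nullMeasurableSet_region_between_oc μ hf hg nullMeasurableSet_univ
  exact hk.integrable_indicator₀ hregion

lemma integrable_setIntegral_Ioc [SFinite μ] (hf : AEMeasurable f μ) (hg : AEMeasurable g μ)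
    (hk : IntegrableOn (Function.uncurry k) {z | z.2 ∈ Ioc (f z.1) (g z.1)} (μ.prod volume)) :
    Integrable (fun a => ∫ v in Ioc (f a) (g a), k a v) μ := by
  simpa only [integral_indicator measurableSet_Ioc]
    using (integrable_indicator_Ioc hf hg hk).integral_prod_left

lemma ae_integrableOn_Ioc [SFinite μ] (hf : AEMeasurable f μ) (hg : AEMeasurable g μ)
    (hk : IntegrableOn (Function.uncurry k) {z | z.2 ∈ Ioc (f z.1) (g z.1)} (μ.prod volume)) :
    ∀ᵐ a ∂μ, IntegrableOn (k a) (Ioc (f a) (g a)) :=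
  (integrable_indicator_Ioc hf hg hk).prod_right_ae.mono fun _ ha =>
    (integrable_indicator_iff measurableSet_Ioc).1 ha

end SetIntegralIoc

namespace IsMemoryCurve

variable {M : ℝ} {x y : ℝ → ℝ} {k : ℝ → ℝ → ℝ}

lemma zero : IsMemoryCurve M fun _ => 0 :=
  ⟨LipschitzWith.const' 0 |>.lipschitzOnWith.weaken zero_le_one, fun _ _ _ => rfl⟩

lemma aemeasurable (hx : IsMemoryCurve M x) : AEMeasurable x (volume.restrict (Ioi 0)) :=
  hx.lipschitzOnWith.continuousOn.aemeasurable measurableSet_Ioi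

lemma abs_le (hx : IsMemoryCurve M x) {r : ℝ} (hr : 0 < r) (hrM : r ≤ M) : |x r| ≤ M := by
  have hM : 0 < M := hr.trans_le hrM
  have := hx.lipschitzOnWith.dist_le_mul r hr M hM
  rw [hx.eq_zero M hM le_rfl, Real.dist_eq, Real.dist_eq, sub_zero, NNReal.coe_one, one_mul,
    abs_of_nonpos (sub_nonpos.2 hrM)] at this
  linarith

lemma mem_memoryBox (hx : IsMemoryCurve M x) (hy : IsMemoryCurve M y) {r v : ℝ} (hr : 0 < r)
    (hv : v ∈ Ι (x r) (y r)) : (r, v) ∈ memoryBox M := by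
  have hrM : r ≤ M := by
    by_contra! hlt
    simp [hx.eq_zero r hr hlt.le, hy.eq_zero r hr hlt.le] at hv
  exact ⟨⟨hr.le, hrM⟩, uIcc_subset_Icc (_root_.abs_le.1 (hx.abs_le hr hrM))
    (_root_.abs_le.1 (hy.abs_le hr hrM)) (uIoc_subset_uIcc hv)⟩

lemma integrableOn_Ioc (hx : IsMemoryCurve M x) (hy : IsMemoryCurve M y)
    (hk : IntegrableOn (Function.uncurry k) (memoryBox M)) :
    IntegrableOn (Function.uncurry k) {z | z.2 ∈ Ioc (x z.1) (y z.1)}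
      ((volume.restrict (Ioi 0)).prod volume) := by
  have hprod : (volume.restrict (Ioi (0 : ℝ))).prod (volume : Measure ℝ) =
      volume.restrict (Ioi 0 ×ˢ univ) := by
    rw [Measure.volume_eq_prod, ← Measure.prod_restrict, Measure.restrict_univ]
  rw [IntegrableOn, hprod, Measure.restrict_restrict' (measurableSet_Ioi.prod .univ)]
  exact hk.mono_set fun z hz => hx.mem_memoryBox hy hz.2.1 (Ioc_subset_uIoc hz.1)

lemma ae_intervalIntegrable (hx : IsMemoryCurve M x) (hy : IsMemoryCurve M y)
    (hk : IntegrableOn (Function.uncurry k) (memoryBox M)) :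
    ∀ᵐ r ∂(volume.restrict (Ioi 0)), IntervalIntegrable (k r) volume (x r) (y r) :=
  (ae_integrableOn_Ioc hx.aemeasurable hy.aemeasurable (hx.integrableOn_Ioc hy hk)).and
    (ae_integrableOn_Ioc hy.aemeasurable hx.aemeasurable (hy.integrableOn_Ioc hx hk))

lemma integrableOn_intervalIntegral (hx : IsMemoryCurve M x) (hy : IsMemoryCurve M y)
    (hk : IntegrableOn (Function.uncurry k) (memoryBox M)) :
    IntegrableOn (fun r => ∫ v in x r..y r, k r v) (Ioi 0) :=
  (integrable_setIntegral_Ioc hx.aemeasurable hy.aemeasurable (hx.integrableOn_Ioc hy hk)).sub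
    (integrable_setIntegral_Ioc hy.aemeasurable hx.aemeasurable (hy.integrableOn_Ioc hx hk))

end IsMemoryCurve

/-- `∫₀^∞ ∫₀^{x(r)} k(r,v) dv dr`: on the memory curve `x(r) = 𝔭_r[p](t)` this is `G[p](t)`,
`V[p](t)`, `D[p](t)` for the kernels `ρ`, `v ρ`, `r ρ` respectively. -/
noncomputable def preisachIntegral (k : ℝ → ℝ → ℝ) (x : ℝ → ℝ) : ℝ :=
  ∫ r in Ioi (0 : ℝ), ∫ v in (0 : ℝ)..x r, k r v

section PreisachIntegral

variable {M : ℝ} {x y : ℝ → ℝ} {k l : ℝ → ℝ → ℝ}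

lemma preisachIntegral_const_mul (c : ℝ) (k : ℝ → ℝ → ℝ) (x : ℝ → ℝ) :
    preisachIntegral (fun r v => c * k r v) x = c * preisachIntegral k x := by
  simp only [preisachIntegral, intervalIntegral.integral_const_mul, integral_const_mul]

lemma preisachIntegral_sub (hx : IsMemoryCurve M x)
    (hk : IntegrableOn (Function.uncurry k) (memoryBox M))
    (hl : IntegrableOn (Function.uncurry l) (memoryBox M)) :
    preisachIntegral (fun r v => k r v - l r v) x =
      preisachIntegral k x - preisachIntegral l x := by
  rw [preisachIntegral, preisachIntegral, preisachIntegral,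
    ← integral_sub (IsMemoryCurve.zero.integrableOn_intervalIntegral hx hk)
      (IsMemoryCurve.zero.integrableOn_intervalIntegral hx hl)]
  refine integral_congr_ae ?_
  filter_upwards [IsMemoryCurve.zero.ae_intervalIntegrable hx hk,
    IsMemoryCurve.zero.ae_intervalIntegrable hx hl] with r hkr hlr
  exact intervalIntegral.integral_sub hkr hlr

lemma preisachIntegral_sub_preisachIntegral (hx : IsMemoryCurve M x) (hy : IsMemoryCurve M y)
    (hk : IntegrableOn (Function.uncurry k) (memoryBox M)) :
    preisachIntegral k y - preisachIntegral k x = ∫ r in Ioi (0 : ℝ), ∫ v in x r..y r, k r v := by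
  rw [preisachIntegral, preisachIntegral,
    ← integral_sub (IsMemoryCurve.zero.integrableOn_intervalIntegral hy hk)
      (IsMemoryCurve.zero.integrableOn_intervalIntegral hx hk)]
  refine integral_congr_ae ?_
  filter_upwards [IsMemoryCurve.zero.ae_intervalIntegrable hx hk,
    IsMemoryCurve.zero.ae_intervalIntegrable hy hk] with r hxr hyr
  exact intervalIntegral.integral_interval_sub_left hyr hxr

lemma preisachIntegral_mono (hx : IsMemoryCurve M x) (hy : IsMemoryCurve M y)
    (hk : IntegrableOn (Function.uncurry k) (memoryBox M)) (hk0 : ∀ r > 0, ∀ v, 0 ≤ k r v)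
    (hxy : ∀ r > 0, x r ≤ y r) : preisachIntegral k x ≤ preisachIntegral k y := by
  rw [← sub_nonneg, preisachIntegral_sub_preisachIntegral hx hy hk]
  exact setIntegral_nonneg measurableSet_Ioi fun r hr =>
    intervalIntegral.integral_nonneg (hxy r hr) fun v _ => hk0 r hr v

end PreisachIntegral

/-- A density `ρ` of a Preisach operator, dominated by a function `ρs` of the memory parameter
(written `ρ*` in the literature) that is integrable on `(0,∞)`. -/
structure IsPreisachDensity (ρ : ℝ → ℝ → ℝ) (ρs : ℝ → ℝ) : Prop where
  measurable : Measurable (Function.uncurry ρ)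
  bounds : ∀ r v, 0 ≤ ρ r v ∧ ρ r v ≤ ρs r
  integrableOn : IntegrableOn ρs (Ioi 0)

namespace IsPreisachDensity

variable {ρ w : ℝ → ℝ → ℝ} {ρs x y : ℝ → ℝ} {M : ℝ}

lemma majorant_nonneg (hρ : IsPreisachDensity ρ ρs) (r : ℝ) : 0 ≤ ρs r :=
  (hρ.bounds r 0).1.trans (hρ.bounds r 0).2

lemma integrableOn_memoryBox (hρ : IsPreisachDensity ρ ρs) (M : ℝ) :
    IntegrableOn (Function.uncurry ρ) (memoryBox M) := by
  have hρs : IntegrableOn ρs (Icc 0 M) :=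
    (integrableOn_Icc_iff_integrableOn_Ioc (by finiteness)).2
      (hρ.integrableOn.mono_set Ioc_subset_Ioi_self)
  rw [IntegrableOn, memoryBox, Measure.volume_eq_prod, ← Measure.prod_restrict]
  refine (hρs.integrable.comp_fst _).mono' hρ.measurable.aestronglyMeasurable
    (.of_forall fun z => ?_)
  rw [Function.uncurry, Real.norm_of_nonneg (hρ.bounds z.1 z.2).1]
  exact (hρ.bounds z.1 z.2).2

lemma integrableOn_mul (hρ : IsPreisachDensity ρ ρs) (hw : Continuous (Function.uncurry w))
    (M : ℝ) : IntegrableOn (Function.uncurry fun r v => w r v * ρ r v) (memoryBox M) :=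
  (hρ.integrableOn_memoryBox M).continuousOn_mul hw.continuousOn
    (isCompact_Icc.prod isCompact_Icc)

lemma abs_preisachIntegral_sub_le (hρ : IsPreisachDensity ρ ρs)
    (hw : Continuous (Function.uncurry w)) (hx : IsMemoryCurve M x) (hy : IsMemoryCurve M y)
    {B δ : ℝ} (hB : 0 ≤ B) (hwB : ∀ r > 0, ∀ v ∈ Ι (x r) (y r), |w r v| ≤ B)
    (hδ : ∀ r > 0, |y r - x r| ≤ δ) :
    |preisachIntegral (fun r v => w r v * ρ r v) y -
      preisachIntegral (fun r v => w r v * ρ r v) x| ≤ B * (∫ r in Ioi (0 : ℝ), ρs r) * δ := by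
  rw [preisachIntegral_sub_preisachIntegral hx hy (hρ.integrableOn_mul hw M),
    ← integral_const_mul, ← integral_mul_const, ← Real.norm_eq_abs]
  refine norm_integral_le_of_norm_le ((hρ.integrableOn.const_mul B).mul_const δ) ?_
  filter_upwards [ae_restrict_mem measurableSet_Ioi] with r hr
  have hinner : ‖∫ v in x r..y r, w r v * ρ r v‖ ≤ B * ρs r * |y r - x r| := by
    refine intervalIntegral.norm_integral_le_of_norm_le_const fun v hv => ?_
    rw [norm_mul, Real.norm_of_nonneg (hρ.bounds r v).1]
    exact mul_le_mul (hwB r hr v hv) (hρ.bounds r v).2 (hρ.bounds r v).1 hB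
  exact hinner.trans
    (mul_le_mul_of_nonneg_left (hδ r hr) (mul_nonneg hB (hρ.majorant_nonneg r)))

section Deriv

variable {X : ℝ → ℝ → ℝ} {t F' G' V' D' : ℝ}

lemma abs_deriv_le (hρ : IsPreisachDensity ρ ρs) (hw : Continuous (Function.uncurry w))
    (hX : ∀ᶠ s in 𝓝 t, IsMemoryCurve M (X s))
    (hF : HasDerivAt (fun s => preisachIntegral (fun r v => w r v * ρ r v) (X s)) F' t)
    {B C : ℝ} (hB : 0 ≤ B)
    (hwB : ∀ᶠ s in 𝓝[>] t, ∀ r > 0, ∀ v ∈ Ι (X t r) (X s r), |w r v| ≤ B)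
    (hC : ∀ᶠ s in 𝓝[>] t, ∀ r > 0, |X s r - X t r| ≤ C * (s - t)) :
    |F'| ≤ B * (∫ r in Ioi (0 : ℝ), ρs r) * C := by
  refine abs_deriv_le_of_eventually_abs_sub_le hF.hasDerivWithinAt ?_
  filter_upwards [nhdsWithin_le_nhds hX, hwB, hC] with s hXs hwBs hCs
  rw [mul_assoc]
  exact hρ.abs_preisachIntegral_sub_le hw hX.self_of_nhds hXs hB hwBs hCs

lemma deriv_eq_zero_of_stationary (hρ : IsPreisachDensity ρ ρs)
    (hw : Continuous (Function.uncurry w)) (hX : ∀ᶠ s in 𝓝 t, IsMemoryCurve M (X s))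
    (hF : HasDerivAt (fun s => preisachIntegral (fun r v => w r v * ρ r v) (X s)) F' t)
    (hC : ∀ C > 0, ∀ᶠ s in 𝓝[>] t, ∀ r > 0, |X s r - X t r| ≤ C * (s - t)) : F' = 0 := by
  have hbox : IsCompact (memoryBox M) := isCompact_Icc.prod isCompact_Icc
  obtain ⟨B, hB⟩ := hbox.exists_bound_of_continuousOn hw.continuousOn
  refine eq_zero_of_forall_pos_abs_le_mul (b := |B| * ∫ r in Ioi (0 : ℝ), ρs r) fun C hC0 => ?_
  rw [mul_comm C]
  refine hρ.abs_deriv_le hw hX hF (abs_nonneg B) ?_ (hC C hC0)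
  filter_upwards [nhdsWithin_le_nhds hX] with s hXs r hr v hv
  exact (hB _ (hX.self_of_nhds.mem_memoryBox hXs hr hv)).trans (le_abs_self B)

lemma deriv_eq_zero_of_weight_small (hρ : IsPreisachDensity ρ ρs)
    (hw : Continuous (Function.uncurry w)) (hX : ∀ᶠ s in 𝓝 t, IsMemoryCurve M (X s))
    (hF : HasDerivAt (fun s => preisachIntegral (fun r v => w r v * ρ r v) (X s)) F' t)
    {C : ℝ} (hC : ∀ᶠ s in 𝓝[>] t, ∀ r > 0, |X s r - X t r| ≤ C * (s - t))
    (hwη : ∀ η > 0, ∀ᶠ s in 𝓝[>] t, ∀ r > 0, ∀ v ∈ Ι (X t r) (X s r), |w r v| ≤ η) :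
    F' = 0 := by
  refine eq_zero_of_forall_pos_abs_le_mul (b := (∫ r in Ioi (0 : ℝ), ρs r) * C) fun η hη => ?_
  rw [← mul_assoc]
  exact hρ.abs_deriv_le hw hX hF hη.le (hwη η hη) hC

lemma hasDerivAt_energy_balance (hρ : IsPreisachDensity ρ ρs)
    (hX : ∀ᶠ s in 𝓝 t, IsMemoryCurve M (X s))
    (hG : HasDerivAt (fun s => preisachIntegral ρ (X s)) G' t)
    (hV : HasDerivAt (fun s => preisachIntegral (fun r v => v * ρ r v) (X s)) V' t)
    (hD : HasDerivAt (fun s => preisachIntegral (fun r v => r * ρ r v) (X s)) D' t) (c σ : ℝ) :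
    HasDerivAt (fun s => preisachIntegral (fun r v => (c - v - σ * r) * ρ r v) (X s))
      (c * G' - V' - σ * D') t := by
  have hGint : IntegrableOn (Function.uncurry fun r v => c * ρ r v) (memoryBox M) :=
    (hρ.integrableOn_memoryBox M).const_mul c
  have hVint := hρ.integrableOn_mul (w := fun _ v => v) (by fun_prop) M
  have hDint : IntegrableOn (Function.uncurry fun r v => σ * (r * ρ r v)) (memoryBox M) :=
    (hρ.integrableOn_mul (w := fun r _ => r) (by fun_prop) M).const_mul σ
  have hGVint : IntegrableOn (Function.uncurry fun r v => c * ρ r v - v * ρ r v) (memoryBox M) :=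
    hGint.sub hVint
  refine (((hG.const_mul c).sub hV).sub (hD.const_mul σ)).congr_of_eventuallyEq ?_
  filter_upwards [hX] with s hs
  simp only [sub_mul, mul_assoc, Pi.sub_apply]
  rw [preisachIntegral_sub hs hGVint hDint, preisachIntegral_sub hs hGint hVint,
    preisachIntegral_const_mul, preisachIntegral_const_mul]

lemma energy_balance_of_stationary (hρ : IsPreisachDensity ρ ρs)
    (hX : ∀ᶠ s in 𝓝 t, IsMemoryCurve M (X s))
    (hG : HasDerivAt (fun s => preisachIntegral ρ (X s)) G' t)
    (hV : HasDerivAt (fun s => preisachIntegral (fun r v => v * ρ r v) (X s)) V' t)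
    (hD : HasDerivAt (fun s => preisachIntegral (fun r v => r * ρ r v) (X s)) D' t)
    (hC : ∀ C > 0, ∀ᶠ s in 𝓝[>] t, ∀ r > 0, |X s r - X t r| ≤ C * (s - t)) (c : ℝ) :
    c * G' - V' = |D'| := by
  have hD0 : D' = 0 := hρ.deriv_eq_zero_of_stationary (w := fun r _ => r) (by fun_prop) hX hD hC
  have hbal : c * G' - V' - 0 * D' = 0 :=
    hρ.deriv_eq_zero_of_stationary (w := fun r v => c - v - 0 * r) (by fun_prop) hX
      (hρ.hasDerivAt_energy_balance hX hG hV hD c 0) hC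
  simpa only [hD0, abs_zero, zero_mul, sub_zero] using hbal

lemma energy_balance_of_weight_small (hρ : IsPreisachDensity ρ ρs)
    (hX : ∀ᶠ s in 𝓝 t, IsMemoryCurve M (X s))
    (hG : HasDerivAt (fun s => preisachIntegral ρ (X s)) G' t)
    (hV : HasDerivAt (fun s => preisachIntegral (fun r v => v * ρ r v) (X s)) V' t)
    (hD : HasDerivAt (fun s => preisachIntegral (fun r v => r * ρ r v) (X s)) D' t)
    {C c σ : ℝ} (hC : ∀ᶠ s in 𝓝[>] t, ∀ r > 0, |X s r - X t r| ≤ C * (s - t))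
    (hwη : ∀ η > 0, ∀ᶠ s in 𝓝[>] t, ∀ r > 0, ∀ v ∈ Ι (X t r) (X s r), |c - v - σ * r| ≤ η) :
    c * G' - V' = σ * D' :=
  sub_eq_zero.1 <| hρ.deriv_eq_zero_of_weight_small (w := fun r v => c - v - σ * r) (by fun_prop)
    hX (hρ.hasDerivAt_energy_balance hX hG hV hD c σ) hC hwη

lemma dissipation_deriv_nonneg (hρ : IsPreisachDensity ρ ρs)
    (hX : ∀ᶠ s in 𝓝 t, IsMemoryCurve M (X s))
    (hD : HasDerivAt (fun s => preisachIntegral (fun r v => r * ρ r v) (X s)) D' t)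
    (hmono : ∀ᶠ s in 𝓝[>] t, ∀ r > 0, X t r ≤ X s r) : 0 ≤ D' := by
  refine deriv_nonneg_of_eventually_le hD.hasDerivWithinAt ?_
  filter_upwards [nhdsWithin_le_nhds hX, hmono] with s hs hle
  exact preisachIntegral_mono hX.self_of_nhds hs
    (hρ.integrableOn_mul (w := fun r _ => r) (by fun_prop) M)
    (fun r hr v => mul_nonneg (le_of_lt hr) (hρ.bounds r v).1) hle

lemma dissipation_deriv_nonpos (hρ : IsPreisachDensity ρ ρs)
    (hX : ∀ᶠ s in 𝓝 t, IsMemoryCurve M (X s))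
    (hD : HasDerivAt (fun s => preisachIntegral (fun r v => r * ρ r v) (X s)) D' t)
    (hanti : ∀ᶠ s in 𝓝[>] t, ∀ r > 0, X s r ≤ X t r) : D' ≤ 0 := by
  refine neg_nonneg.1 (deriv_nonneg_of_eventually_le hD.neg.hasDerivWithinAt ?_)
  filter_upwards [nhdsWithin_le_nhds hX, hanti] with s hs hle
  exact neg_le_neg <| preisachIntegral_mono hs hX.self_of_nhds
    (hρ.integrableOn_mul (w := fun r _ => r) (by fun_prop) M)
    (fun r hr v => mul_nonneg (le_of_lt hr) (hρ.bounds r v).1) hle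

end Deriv

end IsPreisachDensity

namespace IsPlay

variable {T t p' : ℝ} {p : ℝ → ℝ} {ξ ξ' : ℝ → ℝ → ℝ}

lemma eventually_abs_sub_le (hξ : ∀ r > 0, IsPlay T r p (ξ r) (ξ' r)) (ht : t ∈ Ico 0 T)
    (hp : HasDerivAt p p' t) {C : ℝ} (hC : |p'| < C) :
    ∀ᶠ s in 𝓝[>] t, ∀ r > 0, |ξ r s - ξ r t| ≤ C * (s - t) := by
  filter_upwards [eventually_forall_abs_sub_le hp.hasDerivWithinAt hC, Ioo_mem_nhdsGT ht.2]
    with s hosc hs r hr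
  exact (hξ r hr).abs_sub_le ht.1 hs.1.le hs.2.le hosc

lemma eventually_le_of_input_deriv_pos (hξ : ∀ r > 0, IsPlay T r p (ξ r) (ξ' r))
    (ht : t ∈ Ico 0 T) (hp : HasDerivAt p p' t) (hp' : 0 < p') :
    ∀ᶠ s in 𝓝[>] t, ∀ r > 0, ξ r t ≤ ξ r s := by
  filter_upwards [eventually_forall_le_of_deriv_pos hp.hasDerivWithinAt hp', Ioo_mem_nhdsGT ht.2]
    with s hle hs r hr
  exact (hξ r hr).le_of_forall_input_le ht.1 hs.1.le hs.2.le hle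

lemma eventually_ge_of_input_deriv_neg (hξ : ∀ r > 0, IsPlay T r p (ξ r) (ξ' r))
    (ht : t ∈ Ico 0 T) (hp : HasDerivAt p p' t) (hp' : p' < 0) :
    ∀ᶠ s in 𝓝[>] t, ∀ r > 0, ξ r s ≤ ξ r t := by
  filter_upwards [eventually_forall_le_of_deriv_pos hp.neg.hasDerivWithinAt (neg_pos.2 hp'),
    Ioo_mem_nhdsGT ht.2] with s hle hs r hr
  exact (hξ r hr).ge_of_forall_input_ge ht.1 hs.1.le hs.2.le
    fun τ hτ => neg_le_neg_iff.1 (hle τ hτ)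

lemma eventually_abs_input_sub_sub_le (hξ : ∀ r > 0, IsPlay T r p (ξ r) (ξ' r))
    (ht : t ∈ Ico 0 T) (hp : HasDerivAt p p' t) (hp' : 0 < p') {η : ℝ} (hη : 0 < η) :
    ∀ᶠ s in 𝓝[>] t, ∀ r > 0, ∀ v ∈ Ι (ξ r t) (ξ r s), |p t - v - r| ≤ η := by
  filter_upwards [eventually_forall_Icc_abs_sub_le hp.continuousAt.continuousWithinAt hη,
    eventually_le_of_input_deriv_pos hξ ht hp hp', Ioo_mem_nhdsGT ht.2] with s hosc hle hs r hr v hv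
  rw [uIoc_of_le (hle r hr)] at hv
  exact (hξ r hr).abs_input_sub_sub_le ht.1 hs.1.le hs.2.le hosc hv

lemma eventually_abs_input_sub_add_le (hξ : ∀ r > 0, IsPlay T r p (ξ r) (ξ' r))
    (ht : t ∈ Ico 0 T) (hp : HasDerivAt p p' t) (hp' : p' < 0) {η : ℝ} (hη : 0 < η) :
    ∀ᶠ s in 𝓝[>] t, ∀ r > 0, ∀ v ∈ Ι (ξ r t) (ξ r s), |p t - v + r| ≤ η := by
  filter_upwards [eventually_forall_Icc_abs_sub_le hp.continuousAt.continuousWithinAt hη,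
    eventually_ge_of_input_deriv_neg hξ ht hp hp', Ioo_mem_nhdsGT ht.2] with s hosc hle hs r hr v hv
  rw [uIoc_of_ge (hle r hr)] at hv
  exact (hξ r hr).abs_input_sub_add_le ht.1 hs.1.le hs.2.le hosc hv

lemma energy_identity_of_hasDerivAt (hξ : ∀ r > 0, IsPlay T r p (ξ r) (ξ' r)) {M : ℝ}
    (hM : ∀ τ ∈ Icc 0 T, |p τ| ≤ M) {ρ : ℝ → ℝ → ℝ} {ρs : ℝ → ℝ} (hρ : IsPreisachDensity ρ ρs)
    (ht : t ∈ Ioo 0 T) (hp : HasDerivAt p p' t) {G' V' D' : ℝ}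
    (hG : HasDerivAt (fun s => preisachIntegral ρ fun r => ξ r s) G' t)
    (hV : HasDerivAt (fun s => preisachIntegral (fun r v => v * ρ r v) fun r => ξ r s) V' t)
    (hD : HasDerivAt (fun s => preisachIntegral (fun r v => r * ρ r v) fun r => ξ r s) D' t) :
    p t * G' - V' = |D'| := by
  have hX : ∀ᶠ s in 𝓝 t, IsMemoryCurve M fun r => ξ r s := by
    filter_upwards [Icc_mem_nhds ht.1 ht.2] with s hs using isMemoryCurve hξ hM hs
  have ht' : t ∈ Ico 0 T := Ioo_subset_Ico_self ht
  have hC := eventually_abs_sub_le hξ ht' hp (lt_add_one |p'|)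
  rcases lt_trichotomy p' 0 with hneg | rfl | hpos
  · have hD0 : D' ≤ 0 :=
      hρ.dissipation_deriv_nonpos hX hD (eventually_ge_of_input_deriv_neg hξ ht' hp hneg)
    have hbal : p t * G' - V' = -1 * D' :=
      hρ.energy_balance_of_weight_small hX hG hV hD hC fun η hη => by
        simpa only [neg_one_mul, sub_neg_eq_add]
          using eventually_abs_input_sub_add_le hξ ht' hp hneg hη
    rw [hbal, abs_of_nonpos hD0, neg_one_mul]
  · exact hρ.energy_balance_of_stationary hX hG hV hD
      (fun C hC0 => eventually_abs_sub_le hξ ht' hp (abs_zero.trans_lt hC0)) (p t)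
  · have hD0 : 0 ≤ D' :=
      hρ.dissipation_deriv_nonneg hX hD (eventually_le_of_input_deriv_pos hξ ht' hp hpos)
    have hbal : p t * G' - V' = 1 * D' :=
      hρ.energy_balance_of_weight_small hX hG hV hD hC fun η hη => by
        simpa only [one_mul] using eventually_abs_input_sub_sub_le hξ ht' hp hpos hη
    rw [hbal, abs_of_nonneg hD0, one_mul]

end IsPlay

/-- The Preisach energy identity: `G[p]'(t)·p(t) − V[p]'(t) = |D[p]'(t)|` a.e. in `(0,T)`,
where `V[p](t) = ∫₀^∞∫₀^{𝔭_r[p](t)} v ρ(r,v) dv dr` is the Preisach potential and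
`D[p](t) = ∫₀^∞∫₀^{𝔭_r[p](t)} r ρ(r,v) dv dr` the dissipation operator. -/
theorem preisach_energy_identity (T : ℝ) (hT : 0 < T)
    (ρ : ℝ → ℝ → ℝ) (ρs : ℝ → ℝ)
    (hρmeas : Measurable (Function.uncurry ρ))
    (hρbd : ∀ r v, 0 ≤ ρ r v ∧ ρ r v ≤ ρs r)
    (hρs : IntegrableOn ρs (Set.Ioi 0) volume)
    (p p' : ℝ → ℝ) (hp' : IntervalIntegrable p' volume 0 T)
    (hp : ∀ t ∈ Set.Icc 0 T, p t = p 0 + ∫ s in (0:ℝ)..t, p' s)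
    -- the family of play outputs `ξ r = 𝔭_r[p]` with a.e. derivatives `ξ' r`:
    (ξ ξ' : ℝ → ℝ → ℝ) (hξ : ∀ r > (0:ℝ), IsPlay T r p (ξ r) (ξ' r))
    -- `G'`, `V'`, `D'` are the a.e. time derivatives of `G[p]`, `V[p]`, `D[p]`:
    (G' V' D' : ℝ → ℝ)
    (hG'int : IntervalIntegrable G' volume 0 T)
    (hV'int : IntervalIntegrable V' volume 0 T)
    (hD'int : IntervalIntegrable D' volume 0 T)
    (hGrep : ∀ t ∈ Set.Icc 0 T,
        (∫ r in Set.Ioi (0:ℝ), ∫ v in (0:ℝ)..(ξ r t), ρ r v) =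
        (∫ r in Set.Ioi (0:ℝ), ∫ v in (0:ℝ)..(ξ r 0), ρ r v) + ∫ s in (0:ℝ)..t, G' s)
    (hVrep : ∀ t ∈ Set.Icc 0 T,
        (∫ r in Set.Ioi (0:ℝ), ∫ v in (0:ℝ)..(ξ r t), v * ρ r v) =
        (∫ r in Set.Ioi (0:ℝ), ∫ v in (0:ℝ)..(ξ r 0), v * ρ r v) + ∫ s in (0:ℝ)..t, V' s)
    (hDrep : ∀ t ∈ Set.Icc 0 T,
        (∫ r in Set.Ioi (0:ℝ), ∫ v in (0:ℝ)..(ξ r t), r * ρ r v) =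
        (∫ r in Set.Ioi (0:ℝ), ∫ v in (0:ℝ)..(ξ r 0), r * ρ r v) + ∫ s in (0:ℝ)..t, D' s) :
    ∀ᵐ t ∂(volume.restrict (Set.Ioo 0 T)), G' t * p t - V' t = |D' t| := by
  have hpprim : IsPrimitiveOn T p p' := ⟨hp', hp⟩
  have hGprim : IsPrimitiveOn T (fun t => preisachIntegral ρ fun r => ξ r t) G' :=
    ⟨hG'int, hGrep⟩
  have hVprim :
      IsPrimitiveOn T (fun t => preisachIntegral (fun r v => v * ρ r v) fun r => ξ r t) V' :=
    ⟨hV'int, hVrep⟩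
  have hDprim :
      IsPrimitiveOn T (fun t => preisachIntegral (fun r v => r * ρ r v) fun r => ξ r t) D' :=
    ⟨hD'int, hDrep⟩
  obtain ⟨M, hM⟩ := isCompact_Icc.exists_bound_of_continuousOn hpprim.continuousOn
  filter_upwards [hpprim.ae_hasDerivAt, hGprim.ae_hasDerivAt, hVprim.ae_hasDerivAt,
    hDprim.ae_hasDerivAt, ae_restrict_mem measurableSet_Ioo] with t hpt hGt hVt hDt ht
  rw [mul_comm]
  exact IsPlay.energy_identity_of_hasDerivAt hξ hM ⟨hρmeas, hρbd, hρs⟩ ht hpt hGt hVt hDt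
end
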